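/- arXiv:1701.04633 — 3 statements merged into one kernel-verified Lean document; each statement's English description precedes it below -/
import Mathlib

section
/- Let K be a number field with ring of integers O_K, and let a_n(O_K[X]) denote the number of ideals I of O_K[X] with |O_K[X]/I| = n. Then there exists a real constant c > 0 such that Σ_{n≤N} a_n(O_K[X]) ∼ c·N² as N → ∞, i.e. lim_{N→∞} N^{-2} Σ_{n≤N} a_n(O_K[X]) = c. -/
open NumberField Filter Topology

/-!
Let `R = 𝓞 K`. An ideal `I` of `R[X]` of finite index has an increasing chain of leading ideals
`J k ⊆ R`, consisting of the coefficients in degree `k` of the elements of `I` of degree at most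
`k`, and this chain is eventually `⊤`. Writing `J k = E k * J (k + 1)`, chains correspond to
eventually trivial sequences `E` of nonzero ideals, and the index of `I` is
`∏ N(J k) = ∏ N(E k) ^ (k + 1)`.

The number of ideals with a given chain equals their common index: building such an ideal degree
by degree, the part of degree `≤ k` can be extended to degree `≤ k + 1` in exactly
`N(E k) ^ (k + 1)` ways. This rests on two properties of Dedekind domains: `B / I B` is cyclic for
nonzero ideals, and all coefficients of an element of `I` of degree at most `k` lie in `J k`.
Hence `a_n(R[X]) = n * b_n`, where `b_n` counts the sequences `E` with `∏ N(E k) ^ (k + 1) = n`.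

Separating the first term of `E` from its tail gives
`∑_{n ≤ N} b_n = ∑_E A(N / ∏ N(E k) ^ (k + 2))`, with `A` the ideal counting function of `R`.
As `A(x) ∼ κ x` and `∑_E ∏ N(E k) ^ (-(k + 2))` converges, dominated convergence yields
`∑_{n ≤ N} b_n ∼ c N`, and partial summation yields `∑_{n ≤ N} n b_n ∼ (c / 2) N ^ 2`.
-/

section CyclicModules

variable {R M N : Type*} [CommRing R] [AddCommGroup M] [Module R M] [AddCommGroup N] [Module R N]

/-- `b` generates `M` modulo `I • M`, and its class has annihilator exactly `I`; in other words
`r ↦ r • b` induces an isomorphism `R ⧸ I ≃ M ⧸ I • M`. -/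
structure IsGeneratorMod (I : Ideal R) (b : M) : Prop where
  sup_span_eq_top : I • (⊤ : Submodule R M) ⊔ Submodule.span R {b} = ⊤
  mem_of_smul_mem : ∀ r : R, r • b ∈ I • (⊤ : Submodule R M) → r ∈ I

variable {I : Ideal R} {b : M}

lemma IsGeneratorMod.linearMap_ext (hb : IsGeneratorMod I b) (hN : I ≤ Module.annihilator R N)
    {f g : M →ₗ[R] N} (h : f b = g b) : f = g := by
  rw [← sub_eq_zero, ← LinearMap.ker_eq_top, eq_top_iff, ← hb.sup_span_eq_top, sup_le_iff,
    Submodule.smul_le, Submodule.span_singleton_le_iff_mem, LinearMap.mem_ker]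
  refine ⟨fun r hr m _ => ?_, by rw [LinearMap.sub_apply, h, sub_self]⟩
  rw [LinearMap.mem_ker, map_smul, Module.mem_annihilator.1 (hN hr)]

lemma IsGeneratorMod.exists_linearMap_apply_eq (hb : IsGeneratorMod I b)
    (hN : I ≤ Module.annihilator R N) (n : N) : ∃ f : M →ₗ[R] N, f b = n := by
  let π : R →ₗ[R] M ⧸ I • (⊤ : Submodule R M) := Submodule.mkQ _ ∘ₗ LinearMap.toSpanSingleton R M b
  have hπ : Function.Surjective π := by
    rw [← LinearMap.range_eq_top, LinearMap.range_comp, LinearMap.range_toSpanSingleton,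
      Submodule.map_mkQ_eq_top, hb.sup_span_eq_top]
  have hker : LinearMap.ker π ≤ LinearMap.ker (LinearMap.toSpanSingleton R N n) := fun r hr =>
    Module.mem_annihilator.1 (hN (hb.mem_of_smul_mem r ((Submodule.Quotient.mk_eq_zero _).1 hr))) n
  let e := π.quotKerEquivOfSurjective hπ
  refine ⟨(LinearMap.ker π).liftQ _ hker ∘ₗ e.symm.toLinearMap ∘ₗ Submodule.mkQ _, ?_⟩
  have he : e.symm (Submodule.Quotient.mk b) = Submodule.Quotient.mk 1 := by
    rw [LinearEquiv.symm_apply_eq]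
    change _ = Submodule.Quotient.mk ((1 : R) • b)
    rw [one_smul]
  change (LinearMap.ker π).liftQ _ hker (e.symm (Submodule.Quotient.mk b)) = n
  rw [he, Submodule.liftQ_apply, LinearMap.toSpanSingleton_apply_one]

lemma card_smul_eq [Finite N] {e : R} {t : N} (ht : t ∈ (LinearMap.lsmul R N e).range) :
    Nat.card {n : N // e • n = t} = Nat.card (N ⧸ (LinearMap.lsmul R N e).range) := by
  obtain ⟨n, rfl⟩ := ht
  exact (Nat.card_congr ((LinearMap.lsmul R N e).toAddMonoidHom.fiberEquivKer n)).trans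
    AddSubgroup.index_range.symm

lemma mul_sup_span_mul_eq {I E B : Ideal R} {e b : R} (he : I * E ⊔ Ideal.span {e} = E)
    (hb : I * B ⊔ Ideal.span {b} = B) : I * (E * B) ⊔ Ideal.span {e * b} = E * B := by
  have heE : Ideal.span {e} ≤ E := le_sup_right.trans_eq he
  refine le_antisymm (sup_le Ideal.mul_le_right ?_) ?_
  · rw [← Ideal.span_singleton_mul_span_singleton]
    exact Ideal.mul_mono heE (le_sup_right.trans_eq hb)
  · calc E * B = I * E * B ⊔ Ideal.span {e} * (I * B ⊔ Ideal.span {b}) := by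
          rw [hb, ← Ideal.sup_mul, he]
      _ = I * (E * B) ⊔ (I * (Ideal.span {e} * B) ⊔ Ideal.span {e * b}) := by
          rw [Ideal.mul_sup, Ideal.span_singleton_mul_span_singleton, mul_assoc,
            mul_left_comm I (Ideal.span {e})]
      _ ≤ I * (E * B) ⊔ Ideal.span {e * b} :=
          sup_le le_sup_left (sup_le_sup_right (Ideal.mul_mono_right (Ideal.mul_mono_left heE)) _)

lemma smul_top_eq_range_lsmul {I E : Ideal R} {e : R}
    (he : I * E ⊔ Ideal.span {e} = E) (hN : I ≤ Module.annihilator R N) :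
    E • (⊤ : Submodule R N) = (LinearMap.lsmul R N e).range := by
  have hI : (I * E) • (⊤ : Submodule R N) = ⊥ := by
    rw [eq_bot_iff, Submodule.smul_le]
    intro r hr n _
    exact Module.mem_annihilator.1 (hN (Ideal.mul_le_left hr)) n
  rw [← he, Submodule.sup_smul, hI, bot_sup_eq, Submodule.ideal_span_singleton_smul,
    LinearMap.range_eq_map]
  rfl

end CyclicModules

section Dedekind

variable {R : Type*} [CommRing R] [IsDedekindDomain R]

lemma isGeneratorMod_of_sup_span_eq {I B : Ideal R} (hB : B ≠ ⊥) {b : B}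
    (hb : I * B ⊔ Ideal.span {(b : R)} = B) : IsGeneratorMod I b where
  sup_span_eq_top := by
    refine Submodule.map_injective_of_injective B.injective_subtype ?_
    rw [Submodule.map_sup, Submodule.map_smul'', Submodule.map_span, Set.image_singleton,
      Submodule.map_top, Submodule.range_subtype]
    exact hb
  mem_of_smul_mem r hr := by
    have hrb : r * b ∈ I * B := (Submodule.mem_smul_top_iff I B _).1 hr
    have hle : Ideal.span {r} * B ≤ I * B := by
      rw [Ideal.span_singleton_mul_le_iff]
      intro x hx
      rw [← hb, Submodule.mem_sup] at hx
      obtain ⟨j, hj, y, hy, rfl⟩ := hx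
      obtain ⟨s, rfl⟩ := Ideal.mem_span_singleton'.1 hy
      rw [mul_add, mul_left_comm]
      exact add_mem (Ideal.mul_mem_left _ r hj) (Ideal.mul_mem_left _ s hrb)
    rwa [← Ideal.dvd_iff_le, mul_dvd_mul_iff_right hB, Ideal.dvd_iff_le,
      Ideal.span_singleton_le_iff_mem] at hle

lemma exists_mul_sup_span_eq {I B : Ideal R} (hI : I ≠ ⊥) (hB : B ≠ ⊥) :
    ∃ b : B, I * B ⊔ Ideal.span {(b : R)} = B := by
  obtain ⟨b, hb⟩ := IsDedekindDomain.exists_sup_span_eq (I := I * B) (J := B) Ideal.mul_le_right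
    (mul_ne_zero hI hB)
  have hbB : b ∈ B := by
    rw [← hb]
    exact Ideal.mem_sup_right (Ideal.mem_span_singleton_self b)
  exact ⟨⟨b, hbB⟩, hb⟩

variable {N : Type*} [AddCommGroup N] [Module R N] [Finite N]

lemma card_linearMap_extending {I E B : Ideal R} (hI : I ≠ ⊥) (hE : E ≠ ⊥) (hB : B ≠ ⊥)
    (hN : I ≤ Module.annihilator R N) (f₀ : ↥(E * B) →ₗ[R] N)
    (hf₀ : ∀ x, f₀ x ∈ E • (⊤ : Submodule R N)) :
    Nat.card {f : B →ₗ[R] N // f ∘ₗ Submodule.inclusion Ideal.mul_le_right = f₀} =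
      Nat.card (N ⧸ E • (⊤ : Submodule R N)) := by
  obtain ⟨b, hb⟩ := exists_mul_sup_span_eq hI hB
  obtain ⟨e, he⟩ := exists_mul_sup_span_eq hI hE
  have hgen_b := isGeneratorMod_of_sup_span_eq hB hb
  let eb : ↥(E * B) := ⟨e * b, Ideal.mul_mem_mul e.2 b.2⟩
  have hEB : E * B ≠ ⊥ := mul_ne_zero hE hB
  have hgen_eb : IsGeneratorMod I eb :=
    isGeneratorMod_of_sup_span_eq hEB (mul_sup_span_mul_eq he hb)
  have hext (f : B →ₗ[R] N) :
      f ∘ₗ Submodule.inclusion Ideal.mul_le_right = f₀ ↔ (e : R) • f b = f₀ eb := by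
    rw [← map_smul]
    exact ⟨fun h => DFunLike.congr_fun h eb, fun h => hgen_eb.linearMap_ext hN h⟩
  let evalEquiv : (B →ₗ[R] N) ≃ N := Equiv.ofBijective (fun f => f b)
    ⟨fun _ _ => hgen_b.linearMap_ext hN, hgen_b.exists_linearMap_apply_eq hN⟩
  rw [smul_top_eq_range_lsmul he hN] at hf₀ ⊢
  rw [Nat.card_congr (evalEquiv.subtypeEquiv (q := fun n => (e : R) • n = f₀ eb) hext)]
  exact card_smul_eq (hf₀ eb)

lemma card_linearPMap_extending {I E B : Ideal R} (hI : I ≠ ⊥) (hE : E ≠ ⊥) (hB : B ≠ ⊥)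
    (hN : I ≤ Module.annihilator R N) (F₀ : R →ₗ.[R] N) (hdom : F₀.domain = E * B)
    (hF₀ : ∀ x, F₀ x ∈ E • (⊤ : Submodule R N)) :
    Nat.card {F : R →ₗ.[R] N // F₀ ≤ F ∧ F.domain = B} =
      Nat.card (N ⧸ E • (⊤ : Submodule R N)) := by
  obtain ⟨_, f₀⟩ := F₀
  obtain rfl : _ = E * B := hdom
  rw [← card_linearMap_extending hI hE hB hN f₀ hF₀]
  refine (Nat.card_congr (Equiv.ofBijective (β := {F : R →ₗ.[R] N // _ ≤ F ∧ F.domain = B})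
    (fun f => ⟨⟨B, f.1⟩, ⟨Ideal.mul_le_right, fun x y hxy => ?_⟩, rfl⟩) ⟨?_, ?_⟩)).symm
  · obtain rfl : y = Submodule.inclusion Ideal.mul_le_right x := Subtype.ext hxy.symm
    exact (DFunLike.congr_fun f.2 x).symm
  · intro f g hfg
    simpa only [Subtype.mk.injEq, LinearPMap.mk.injEq, heq_eq_eq, true_and, ← Subtype.ext_iff]
      using hfg
  · rintro ⟨⟨_, f⟩, hle, rfl⟩
    exact ⟨⟨f, LinearMap.ext fun x => (hle.2 (x := x) rfl).symm⟩, rfl⟩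

end Dedekind

section Index

variable {G H : Type*} [AddCommGroup G] [AddCommGroup H]

lemma relIndex_eq_relIndex_ker_mul_relIndex_map (f : G →+ H) (L D : AddSubgroup G) :
    L.relIndex D = L.relIndex (D ⊓ f.ker) * ((L ⊓ D).map f).relIndex (D.map f) := by
  have hker : L.relIndex (D ⊓ f.ker) = (L ⊓ D).relIndex ((L ⊓ D) ⊔ D ⊓ f.ker) := by
    rw [AddSubgroup.relIndex_sup_left, ← AddSubgroup.inf_relIndex_right (L ⊓ D), inf_assoc,
      inf_left_idem, AddSubgroup.inf_relIndex_right]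
  have hmap : ((L ⊓ D).map f).relIndex (D.map f) = ((L ⊓ D) ⊔ D ⊓ f.ker).relIndex D := by
    rw [← AddSubgroup.relIndex_comap, AddSubgroup.comap_map_eq, inf_comm D,
      ← sup_inf_assoc_of_le _ inf_le_right, AddSubgroup.inf_relIndex_right]
  rw [hker, hmap, AddSubgroup.relIndex_mul_relIndex _ _ _ le_sup_left
    (sup_le inf_le_right inf_le_left), AddSubgroup.inf_relIndex_right]

variable {ι R M : Type*} [CommRing R] [AddCommGroup M] [Module R M] [Finite ι]

lemma mem_smul_top_iff_forall_repr_mem (b : Module.Basis ι R M) (E : Ideal R) {x : M} :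
    x ∈ E • (⊤ : Submodule R M) ↔ ∀ i, b.repr x i ∈ E := by
  refine ⟨fun hx i => ?_, fun hx => ?_⟩
  · have hle : E • (⊤ : Submodule R M) ≤ Submodule.comap (b.coord i) E :=
      Submodule.smul_le.2 fun r hr m _ => by simpa using E.mul_mem_right _ hr
    exact hle hx
  · cases nonempty_fintype ι
    rw [← b.sum_repr x]
    exact sum_mem fun i _ => Submodule.smul_mem_smul (hx i) Submodule.mem_top

lemma card_quotient_smul_top (b : Module.Basis ι R M) (E : Ideal R) :
    Nat.card (M ⧸ E • (⊤ : Submodule R M)) = Nat.card (R ⧸ E) ^ Nat.card ι := by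
  classical
  cases nonempty_fintype ι
  have hmap : (E • (⊤ : Submodule R M)).map b.equivFun.toLinearMap =
      Submodule.pi Set.univ fun _ => E := by
    ext v
    simp only [Submodule.mem_map_equiv, mem_smul_top_iff_forall_repr_mem b, ← b.equivFun_apply,
      LinearEquiv.apply_symm_apply, Submodule.mem_pi, Set.mem_univ, true_imp_iff]
  rw [Nat.card_congr ((Submodule.Quotient.equiv _ _ b.equivFun hmap).trans
    (Submodule.quotientPi _)).toEquiv, Nat.card_fun]

end Index

section LeadIdeal

open Polynomial

variable {R : Type*} [CommRing R]

/-- The ideal of coefficients in degree `j` of the elements of `L` of degree at most `j`. -/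
noncomputable def leadIdeal (L : Submodule R R[X]) (j : ℕ) : Ideal R :=
  (L ⊓ degreeLT R (j + 1)).map (lcoeff R j)

lemma mem_leadIdeal {L : Submodule R R[X]} {j : ℕ} {c : R} :
    c ∈ leadIdeal L j ↔ ∃ f ∈ L, f ∈ degreeLT R (j + 1) ∧ f.coeff j = c := by
  simp [leadIdeal, and_assoc]

lemma leadIdeal_ofPolynomial (I : Ideal R[X]) (j : ℕ) :
    leadIdeal I.ofPolynomial j = I.leadingCoeffNth j := by
  rw [leadIdeal, Ideal.leadingCoeffNth, Ideal.degreeLE, degreeLT_succ_eq_degreeLE, inf_comm]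

lemma leadIdeal_inf_degreeLT (L : Submodule R R[X]) {j k : ℕ} (h : j < k) :
    leadIdeal (L ⊓ degreeLT R k) j = leadIdeal L j := by
  rw [leadIdeal, leadIdeal, inf_assoc, inf_eq_right.2 (degreeLT_mono h)]

lemma mem_degreeLT_iff_coeff {k : ℕ} {f : R[X]} :
    f ∈ degreeLT R k ↔ ∀ m, k ≤ m → f.coeff m = 0 := by
  rw [mem_degreeLT, degree_lt_iff_coeff_zero]

lemma degreeLT_succ_inf_ker_lcoeff (k : ℕ) :
    degreeLT R (k + 1) ⊓ LinearMap.ker (lcoeff R k) = degreeLT R k := by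
  ext f
  simp only [Submodule.mem_inf, mem_degreeLT_iff_coeff, LinearMap.mem_ker, lcoeff_apply]
  refine ⟨fun ⟨hf, hk⟩ m hm => ?_, fun hf => ⟨fun m hm => hf m (by lia), hf k le_rfl⟩⟩
  rcases hm.eq_or_lt with rfl | hlt
  · exact hk
  · exact hf m hlt

lemma map_lcoeff_degreeLT_succ (k : ℕ) : (degreeLT R (k + 1)).map (lcoeff R k) = ⊤ := by
  refine eq_top_iff.2 fun c _ => ⟨monomial k c, ?_, by simp⟩
  exact monomial_coe_mem_degreeLT (Fin.last k) c

lemma relIndex_degreeLT (L : Submodule R R[X]) (k : ℕ) :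
    L.toAddSubgroup.relIndex (degreeLT R k).toAddSubgroup =
      ∏ j ∈ Finset.range k, Nat.card (R ⧸ leadIdeal L j) := by
  induction k with
  | zero =>
    rw [Finset.prod_range_zero, AddSubgroup.relIndex_eq_one]
    intro f hf
    have hf0 : f = 0 := by simpa [mem_degreeLT] using hf
    exact hf0 ▸ L.zero_mem
  | succ k ih =>
    have hker : (degreeLT R (k + 1)).toAddSubgroup ⊓ (lcoeff R k).toAddMonoidHom.ker =
        (degreeLT R k).toAddSubgroup :=
      congrArg Submodule.toAddSubgroup (degreeLT_succ_inf_ker_lcoeff k)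
    have hmap : (degreeLT R (k + 1)).toAddSubgroup.map (lcoeff R k).toAddMonoidHom = ⊤ :=
      congrArg (fun I : Ideal R => I.toAddSubgroup) (map_lcoeff_degreeLT_succ k)
    rw [relIndex_eq_relIndex_ker_mul_relIndex_map (lcoeff R k).toAddMonoidHom, hker, hmap, ih,
      AddSubgroup.relIndex_top_right, Finset.prod_range_succ]
    rfl

lemma X_mul_mem_degreeLT_succ_iff {k : ℕ} {f : R[X]} :
    X * f ∈ degreeLT R (k + 1) ↔ f ∈ degreeLT R k := by
  simp only [mem_degreeLT_iff_coeff]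
  constructor
  · intro hf m hm
    rw [← coeff_X_mul]
    exact hf (m + 1) (by lia)
  · intro hf m hm
    obtain ⟨m, rfl⟩ := Nat.exists_eq_add_one_of_ne_zero (by lia : m ≠ 0)
    rw [coeff_X_mul]
    exact hf m (by lia)

/-- The part of degree `< k` of a polynomial. -/
noncomputable def lowerPart (k : ℕ) : R[X] →ₗ[R] degreeLT R k :=
  (degreeLTEquiv R k).symm.toLinearMap ∘ₗ LinearMap.pi fun i => lcoeff R i

lemma coeff_lowerPart {k i : ℕ} (hi : i < k) (p : R[X]) :
    (lowerPart k p : R[X]).coeff i = p.coeff i :=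
  congrFun ((degreeLTEquiv R k).apply_symm_apply fun i => p.coeff i) ⟨i, hi⟩

lemma lowerPart_coe {k : ℕ} (p : degreeLT R k) : lowerPart k (p : R[X]) = p :=
  (degreeLTEquiv R k).symm_apply_apply p

lemma lowerPart_add_monomial {k : ℕ} {p : R[X]} (hp : p ∈ degreeLT R (k + 1)) :
    lowerPart k p + monomial k (p.coeff k) = p := by
  ext i
  rw [coeff_add, coeff_monomial]
  rcases lt_trichotomy i k with hi | rfl | hi
  · rw [coeff_lowerPart hi, if_neg hi.ne', add_zero]
  · rw [mem_degreeLT_iff_coeff.1 (lowerPart i p).2 i le_rfl, if_pos rfl, zero_add]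
  · rw [mem_degreeLT_iff_coeff.1 (lowerPart k p).2 i hi.le, if_neg hi.ne, add_zero,
      mem_degreeLT_iff_coeff.1 hp i hi]

lemma lowerPart_monomial (k : ℕ) (c : R) : lowerPart k (monomial k c) = 0 := by
  simpa using lowerPart_add_monomial (monomial_coe_mem_degreeLT (Fin.last k) c)

/-- Splits a polynomial of degree `≤ k` into its coefficient in degree `k` and the class modulo `L`
of its part of degree `< k`. -/
noncomputable def leadTail (L : Submodule R R[X]) (k : ℕ) :
    R[X] →ₗ[R] R × (degreeLT R k ⧸ L.submoduleOf (degreeLT R k)) :=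
  (lcoeff R k).prod (Submodule.mkQ _ ∘ₗ lowerPart k)

variable {L : Submodule R R[X]} {k : ℕ}

lemma leadTail_eq_zero_of_mem (hL : L ≤ degreeLT R k) {p : R[X]} (hp : p ∈ L) :
    leadTail L k p = 0 := by
  refine Prod.ext (mem_degreeLT_iff_coeff.1 (hL hp) k le_rfl) ?_
  refine (Submodule.Quotient.mk_eq_zero _).2 ?_
  rw [lowerPart_coe ⟨p, hL hp⟩]
  exact hp

lemma mem_of_leadTail_eq_zero {p : R[X]} (hp : p ∈ degreeLT R (k + 1))
    (h : leadTail L k p = 0) : p ∈ L := by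
  have hcoeff : p.coeff k = 0 := congrArg Prod.fst h
  rw [← lowerPart_add_monomial hp, hcoeff, map_zero, add_zero]
  exact (Submodule.Quotient.mk_eq_zero (L.submoduleOf (degreeLT R k))).1 (congrArg Prod.snd h)

lemma map_leadTail_degreeLT_succ : (degreeLT R (k + 1)).map (leadTail L k) = ⊤ := by
  refine eq_top_iff.2 ?_
  rintro ⟨c, n⟩ -
  obtain ⟨q, rfl⟩ := Submodule.mkQ_surjective _ n
  refine ⟨q + monomial k c, add_mem (degreeLT_mono k.le_succ q.2)
    (monomial_coe_mem_degreeLT (Fin.last k) c), Prod.ext ?_ ?_⟩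
  · simp [leadTail, mem_degreeLT_iff_coeff.1 q.2 k le_rfl]
  · simp [leadTail, lowerPart_coe, lowerPart_monomial]

lemma map_leadTail_inf_comap (G : Submodule R (R × (degreeLT R k ⧸ L.submoduleOf (degreeLT R k)))) :
    (degreeLT R (k + 1) ⊓ G.comap (leadTail L k)).map (leadTail L k) = G := by
  rw [← Submodule.map_inf_eq_map_inf_comap, map_leadTail_degreeLT_succ, top_inf_eq]

lemma inf_comap_map_leadTail {P : Submodule R R[X]} (hLP : L ≤ P) (hP : P ≤ degreeLT R (k + 1)) :
    degreeLT R (k + 1) ⊓ (P.map (leadTail L k)).comap (leadTail L k) = P := by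
  refine le_antisymm ?_ (le_inf hP (Submodule.le_comap_map _ _))
  rintro p ⟨hp, q, hq, hpq⟩
  have hsub : p - q ∈ L := mem_of_leadTail_eq_zero (sub_mem hp (hP hq)) <| by
    rw [map_sub, hpq, sub_self]
  simpa using add_mem (hLP hsub) hq

lemma map_fst_map_leadTail {P : Submodule R R[X]} (hP : P ≤ degreeLT R (k + 1)) :
    (P.map (leadTail L k)).map (LinearMap.fst R _ _) = leadIdeal P k := by
  rw [← Submodule.map_comp, leadIdeal, inf_of_le_left hP]
  rfl

end LeadIdeal

section Truncation

open Polynomial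

variable {R : Type*} [CommRing R] {J : ℕ → Ideal R} {k : ℕ} {L P : Submodule R R[X]}

/-- `L` has the properties of the part of degree `< k` of an ideal of `R[X]` whose ideals of leading
coefficients are `J 0, J 1, …`. -/
structure IsTruncation (J : ℕ → Ideal R) (k : ℕ) (L : Submodule R R[X]) : Prop where
  le : L ≤ degreeLT R k
  shift : ∀ f ∈ L, X * f ∈ degreeLT R k → X * f ∈ L
  lead : ∀ j < k, leadIdeal L j = J j

lemma IsTruncation.inf_degreeLT (h : IsTruncation J (k + 1) L) :
    IsTruncation J k (L ⊓ degreeLT R k) where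
  le := inf_le_right
  shift f hf hX := ⟨h.shift f hf.1 (degreeLT_mono k.le_succ hX), hX⟩
  lead j hj := by rw [leadIdeal_inf_degreeLT _ hj, h.lead j (by lia)]

lemma IsTruncation.isTruncation_succ_iff (h : IsTruncation J k L) :
    IsTruncation J (k + 1) P ∧ P ⊓ degreeLT R k = L ↔
      P ≤ degreeLT R (k + 1) ∧ P ⊓ degreeLT R k = L ∧
        L.map (LinearMap.mulLeft R X) ≤ P ∧ leadIdeal P k = J k := by
  constructor
  · rintro ⟨hP, rfl⟩
    refine ⟨hP.le, rfl, ?_, hP.lead k k.lt_succ_self⟩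
    rintro _ ⟨f, hf, rfl⟩
    exact hP.shift f hf.1 (X_mul_mem_degreeLT_succ_iff.2 hf.2)
  · rintro ⟨hle, rfl, hX, hlead⟩
    refine ⟨⟨hle, fun f hf hXf => hX ⟨f, ⟨hf, X_mul_mem_degreeLT_succ_iff.1 hXf⟩, rfl⟩, ?_⟩, rfl⟩
    intro j hj
    rcases Nat.lt_succ_iff_lt_or_eq.1 hj with hj | rfl
    · rw [← leadIdeal_inf_degreeLT P hj, h.lead j hj]
    · exact hlead

/-- The partial linear map whose graph is the image of `X * L` under `leadTail`. It is well defined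
when `L` is a truncation. -/
noncomputable def shiftPMap (L : Submodule R R[X]) (k : ℕ) :
    R →ₗ.[R] degreeLT R k ⧸ L.submoduleOf (degreeLT R k) :=
  ((L.map (LinearMap.mulLeft R X)).map (leadTail L k)).toLinearPMap

lemma snd_eq_zero_of_mem_map_leadTail (hL : L ≤ degreeLT R k) (hP : P ≤ degreeLT R (k + 1))
    (hPL : P ⊓ degreeLT R k ≤ L) (x : R × (degreeLT R k ⧸ L.submoduleOf (degreeLT R k)))
    (hx : x ∈ P.map (leadTail L k)) (hx1 : x.1 = 0) : x.2 = 0 := by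
  obtain ⟨p, hp, rfl⟩ := hx
  have hpk : p ∈ degreeLT R k := degreeLT_succ_inf_ker_lcoeff (R := R) k ▸ ⟨hP hp, hx1⟩
  rw [leadTail_eq_zero_of_mem hL (hPL ⟨hp, hpk⟩), Prod.snd_zero]

lemma map_mulLeft_X_le_degreeLT (hL : L ≤ degreeLT R k) :
    L.map (LinearMap.mulLeft R X) ≤ degreeLT R (k + 1) := by
  rintro _ ⟨f, hf, rfl⟩
  exact X_mul_mem_degreeLT_succ_iff.2 (hL hf)

lemma IsTruncation.graph_shiftPMap (h : IsTruncation J k L) :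
    (shiftPMap L k).graph = (L.map (LinearMap.mulLeft R X)).map (leadTail L k) := by
  refine Submodule.toLinearPMap_graph_eq _ (snd_eq_zero_of_mem_map_leadTail h.le
    (map_mulLeft_X_le_degreeLT h.le) ?_)
  rintro _ ⟨⟨f, hf, rfl⟩, hXf⟩
  exact h.shift f hf hXf

lemma domain_shiftPMap {m : ℕ} (hL : L ≤ degreeLT R (m + 1)) :
    (shiftPMap L (m + 1)).domain = leadIdeal L m := by
  rw [shiftPMap, Submodule.toLinearPMap_domain, ← Submodule.map_comp, ← Submodule.map_comp,
    leadIdeal, inf_of_le_left hL]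
  congr 1
  exact LinearMap.ext fun f => coeff_X_mul f m

lemma toLinearPMap_graph {M N : Type*} [AddCommGroup M] [Module R M] [AddCommGroup N] [Module R N]
    (F : M →ₗ.[R] N) : F.graph.toLinearPMap = F :=
  LinearPMap.eq_of_eq_graph <| Submodule.toLinearPMap_graph_eq _ fun ⟨_, _⟩ hx hx₁ =>
    F.graph_fst_eq_zero_snd hx hx₁

lemma IsTruncation.isTruncation_succ_of_graph_eq (h : IsTruncation J k L)
    {F : R →ₗ.[R] degreeLT R k ⧸ L.submoduleOf (degreeLT R k)}
    (hP : P ≤ degreeLT R (k + 1)) (hLP : L ≤ P) (hF : F.graph = P.map (leadTail L k)) :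
    IsTruncation J (k + 1) P ∧ P ⊓ degreeLT R k = L ↔ shiftPMap L k ≤ F ∧ F.domain = J k := by
  have hgraph : P ⊓ degreeLT R k = L := by
    refine le_antisymm ?_ (le_inf hLP h.le)
    rintro p ⟨hp, hpk⟩
    have hmem : leadTail L k p ∈ F.graph := hF ▸ Submodule.mem_map_of_mem hp
    have hcoeff : (leadTail L k p).1 = 0 := mem_degreeLT_iff_coeff.1 hpk k le_rfl
    exact mem_of_leadTail_eq_zero (hP hp)
      (Prod.ext hcoeff (F.graph_fst_eq_zero_snd hmem hcoeff))
  have hdom : F.domain = leadIdeal P k := by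
    rw [← F.graph_map_fst_eq_domain, hF, map_fst_map_leadTail hP]
  have hshift : L.map (LinearMap.mulLeft R X) ≤ P ↔ shiftPMap L k ≤ F := by
    rw [← LinearPMap.le_graph_iff, h.graph_shiftPMap, hF]
    refine ⟨Submodule.map_mono, fun hle => ?_⟩
    rw [← inf_comap_map_leadTail hLP hP]
    exact le_inf (map_mulLeft_X_le_degreeLT h.le) (Submodule.map_le_iff_le_comap.1 hle)
  rw [h.isTruncation_succ_iff, hshift, hdom]
  exact ⟨fun hext => hext.2.2, fun hext => ⟨hP, hgraph, hext⟩⟩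

lemma IsTruncation.card_extensions_eq_card_linearPMap (h : IsTruncation J k L) :
    Nat.card {P // IsTruncation J (k + 1) P ∧ P ⊓ degreeLT R k = L} =
      Nat.card {F : R →ₗ.[R] degreeLT R k ⧸ L.submoduleOf (degreeLT R k) //
        shiftPMap L k ≤ F ∧ F.domain = J k} := by
  let toPMap (P : Submodule R R[X]) := (P.map (leadTail L k)).toLinearPMap
  let ofPMap (F : R →ₗ.[R] degreeLT R k ⧸ L.submoduleOf (degreeLT R k)) :=
    degreeLT R (k + 1) ⊓ F.graph.comap (leadTail L k)
  have graph_toPMap {P} (hP : IsTruncation J (k + 1) P ∧ P ⊓ degreeLT R k = L) :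
      (toPMap P).graph = P.map (leadTail L k) :=
    Submodule.toLinearPMap_graph_eq _ (snd_eq_zero_of_mem_map_leadTail h.le hP.1.le hP.2.le)
  have map_ofPMap F : (ofPMap F).map (leadTail L k) = F.graph := map_leadTail_inf_comap _
  have le_ofPMap F : L ≤ ofPMap F := fun p hp => ⟨degreeLT_mono k.le_succ (h.le hp), by
    rw [SetLike.mem_coe, Submodule.mem_comap, leadTail_eq_zero_of_mem h.le hp]
    exact zero_mem _⟩
  have le_of {P} (hP : P ⊓ degreeLT R k = L) : L ≤ P := hP.ge.trans inf_le_left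
  exact Nat.card_congr
    { toFun P := ⟨toPMap P, (h.isTruncation_succ_of_graph_eq P.2.1.le (le_of P.2.2)
        (graph_toPMap P.2)).1 P.2⟩
      invFun F := ⟨ofPMap F, (h.isTruncation_succ_of_graph_eq inf_le_left (le_ofPMap F)
        (map_ofPMap F).symm).2 F.2⟩
      left_inv P := Subtype.ext <| by
        change degreeLT R (k + 1) ⊓ (toPMap P).graph.comap (leadTail L k) = P
        rw [graph_toPMap P.2, inf_comap_map_leadTail (le_of P.2.2) P.2.1.le]
      right_inv F := Subtype.ext <| by
        change ((ofPMap F).map (leadTail L k)).toLinearPMap = F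
        rw [map_ofPMap, toLinearPMap_graph] }

lemma IsTruncation.monomial_mem (h : IsTruncation J k L) {i : ℕ} (hi : i < k) {c : R}
    (hc : c ∈ J 0) : monomial i c ∈ L := by
  induction i with
  | zero =>
    rw [← h.lead 0 hi, mem_leadIdeal] at hc
    obtain ⟨f, hf, hd, rfl⟩ := hc
    rwa [monomial_zero_left, ← eq_C_of_degree_le_zero]
    rwa [zero_add, mem_degreeLT, Nat.cast_one, Nat.WithBot.lt_one_iff_le_zero] at hd
  | succ i ih =>
    have hX := h.shift _ (ih (by lia))
    rw [X_mul_monomial] at hX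
    exact hX (monomial_coe_mem_degreeLT (⟨i + 1, hi⟩ : Fin k) c)

lemma IsTruncation.le_annihilator_quotient (h : IsTruncation J k L) :
    J 0 ≤ Module.annihilator R (degreeLT R k ⧸ L.submoduleOf (degreeLT R k)) := by
  refine fun c hc => Module.mem_annihilator.2 fun n => ?_
  obtain ⟨p, rfl⟩ := Submodule.mkQ_surjective _ n
  refine (Submodule.Quotient.mk_eq_zero _).2 ?_
  change c • (p : R[X]) ∈ L
  rw [(p : R[X]).as_sum_support, Finset.smul_sum]
  refine sum_mem fun i hi => ?_
  have hik : i < k := not_le.1 fun hki =>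
    mem_support_iff.1 hi (mem_degreeLT_iff_coeff.1 p.2 i hki)
  rw [smul_monomial]
  exact h.monomial_mem hik (Ideal.mul_mem_right _ _ hc)

lemma IsTruncation.card_quotient (h : IsTruncation J k L) :
    Nat.card (degreeLT R k ⧸ L.submoduleOf (degreeLT R k)) =
      ∏ j ∈ Finset.range k, Nat.card (R ⧸ J j) := by
  refine (relIndex_degreeLT L k).trans (Finset.prod_congr rfl fun j hj => ?_)
  rw [h.lead j (Finset.mem_range.1 hj)]

lemma card_quotient_smul_top_of_forall_coeff_mem {E : Ideal R}
    (h : ∀ f ∈ L, ∀ i, f.coeff i ∈ E) :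
    Nat.card ((degreeLT R k ⧸ L.submoduleOf (degreeLT R k)) ⧸
      E • (⊤ : Submodule R (degreeLT R k ⧸ L.submoduleOf (degreeLT R k)))) =
      Nat.card (R ⧸ E) ^ k := by
  have hle : L.submoduleOf (degreeLT R k) ≤ E • (⊤ : Submodule R (degreeLT R k)) := fun f hf =>
    (mem_smul_top_iff_forall_repr_mem (degreeLT.basis R k) E).2 fun i => h f hf i
  have hmap : E • (⊤ : Submodule R (degreeLT R k ⧸ L.submoduleOf (degreeLT R k))) =
      (E • (⊤ : Submodule R (degreeLT R k))).map (Submodule.mkQ _) := by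
    rw [Submodule.map_smul'', Submodule.map_top, Submodule.range_mkQ]
  rw [hmap, Nat.card_congr (Submodule.quotientQuotientEquivQuotient _ _ hle).toEquiv,
    card_quotient_smul_top (degreeLT.basis R k), Nat.card_fin]

lemma IsTruncation.shiftPMap_apply_mem {A : Ideal R} (h : IsTruncation J k L)
    (hA : ∀ f ∈ L, ∀ i, f.coeff i ∈ A) (x : (shiftPMap L k).domain) :
    shiftPMap L k x ∈ A • (⊤ : Submodule R (degreeLT R k ⧸ L.submoduleOf (degreeLT R k))) := by
  obtain ⟨_, ⟨f, hf, rfl⟩, hfx⟩ := h.graph_shiftPMap ▸ (shiftPMap L k).mem_graph x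
  have hlower : lowerPart k (X * f) ∈ A • (⊤ : Submodule R (degreeLT R k)) := by
    refine (mem_smul_top_iff_forall_repr_mem (degreeLT.basis R k) A).2 fun i => ?_
    rw [degreeLT.basis_repr, coeff_lowerPart i.2]
    rcases Nat.eq_zero_or_pos (i : ℕ) with hi | hi
    · simp [hi]
    · obtain ⟨j, hj⟩ := Nat.exists_eq_add_one_of_ne_zero hi.ne'
      rw [hj, coeff_X_mul]
      exact hA f hf j
  have hval : Submodule.mkQ (L.submoduleOf (degreeLT R k)) (lowerPart k (X * f)) =
      shiftPMap L k x := congrArg Prod.snd hfx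
  have hmap := Submodule.mem_map_of_mem (f := Submodule.mkQ (L.submoduleOf (degreeLT R k))) hlower
  rw [Submodule.map_smul'', hval] at hmap
  exact Submodule.smul_mono le_rfl le_top hmap

end Truncation

section DedekindTruncation

open Polynomial

variable {R : Type*} [CommRing R] [IsDedekindDomain R] {J E : ℕ → Ideal R} {k : ℕ}
  {L : Submodule R R[X]}

lemma mem_of_forall_mul_mem {A B : Ideal R} (hA : A ≠ ⊥) {c : R}
    (h : ∀ a ∈ A, a * c ∈ A * B) : c ∈ B := by
  have hle : A * Ideal.span {c} ≤ A * B := by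
    rw [mul_comm, Ideal.span_singleton_mul_le_iff]
    exact fun a ha => mul_comm a c ▸ h a ha
  rwa [← Ideal.dvd_iff_le, mul_dvd_mul_iff_left hA, Ideal.dvd_iff_le,
    Ideal.span_singleton_le_iff_mem] at hle

-- For `e ∈ E j` and `f` of degree `j + 1`, the product `e * f` agrees up to lower degree with some
-- `X * g`, `g` of degree `j`, so `e` times each coefficient of `f` lies in `J j = E j * J (j + 1)`,
-- and `E j` cancels.
lemma IsTruncation.coeff_mem (hJ : ∀ j, E j * J (j + 1) = J j) (hE : ∀ j, E j ≠ ⊥)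
    (h : IsTruncation J k L) {j : ℕ} (hj : j < k) {f : R[X]} (hf : f ∈ L)
    (hd : f ∈ degreeLT R (j + 1)) (i : ℕ) : f.coeff i ∈ J j := by
  induction j generalizing f i with
  | zero =>
    rcases i.eq_zero_or_pos with rfl | hi
    · exact h.lead 0 hj ▸ mem_leadIdeal.2 ⟨f, hf, hd, rfl⟩
    · rw [mem_degreeLT_iff_coeff.1 hd i hi]
      exact zero_mem _
  | succ j ih =>
    refine mem_of_forall_mul_mem (hE j) fun e he => ?_
    rw [hJ]
    have hlead : f.coeff (j + 1) ∈ J (j + 1) := h.lead _ hj ▸ mem_leadIdeal.2 ⟨f, hf, hd, rfl⟩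
    obtain ⟨g, hg, hgd, hgc⟩ : ∃ g ∈ L, g ∈ degreeLT R (j + 1) ∧ g.coeff j = e * f.coeff (j + 1) :=
      mem_leadIdeal.1 <| by
        rw [h.lead _ (by lia), ← hJ j]
        exact Ideal.mul_mem_mul he hlead
    have hXgd : X * g ∈ degreeLT R (j + 2) := X_mul_mem_degreeLT_succ_iff.2 hgd
    have hXg : X * g ∈ L := h.shift g hg (degreeLT_mono (by lia) hXgd)
    have hsub : e • f - X * g ∈ degreeLT R (j + 1) := by
      rw [← degreeLT_succ_inf_ker_lcoeff (j + 1)]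
      refine ⟨sub_mem (Submodule.smul_mem _ _ hd) hXgd, ?_⟩
      simp [coeff_X_mul, hgc]
    have hsub_coeff := ih (by lia) (sub_mem (Submodule.smul_mem _ _ hf) hXg) hsub i
    have hXg_coeff : (X * g).coeff i ∈ J j := by
      cases i with
      | zero => simp
      | succ i => exact coeff_X_mul g i ▸ ih (by lia) hg hgd i
    simpa using add_mem hsub_coeff hXg_coeff

theorem IsTruncation.card_extensions {m : ℕ} (h : IsTruncation J (m + 1) L)
    (hJ : ∀ j, E j * J (j + 1) = J j) (hE : ∀ j, E j ≠ ⊥) (hJbot : ∀ j, J j ≠ ⊥)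
    (hfin : ∀ j, Finite (R ⧸ J j)) :
    Nat.card {P // IsTruncation J (m + 2) P ∧ P ⊓ degreeLT R (m + 1) = L} =
      Nat.card (R ⧸ E m) ^ (m + 1) := by
  have hcoeff : ∀ f ∈ L, ∀ i, f.coeff i ∈ E m := fun f hf i =>
    Ideal.mul_le_left (hJ m ▸ h.coeff_mem hJ hE m.lt_succ_self hf (h.le hf) i)
  have : Finite (degreeLT R (m + 1) ⧸ L.submoduleOf (degreeLT R (m + 1))) := by
    refine Nat.finite_of_card_ne_zero ?_
    rw [h.card_quotient]
    exact Finset.prod_ne_zero_iff.2 fun j _ => Nat.card_pos.ne'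
  rw [h.card_extensions_eq_card_linearPMap, card_linearPMap_extending (hJbot 0) (hE m)
    (hJbot (m + 1)) h.le_annihilator_quotient _ _ (h.shiftPMap_apply_mem hcoeff),
    card_quotient_smul_top_of_forall_coeff_mem hcoeff]
  rw [domain_shiftPMap h.le, h.lead m m.lt_succ_self, hJ]

end DedekindTruncation

section Fibres

variable {α β : Type*}

lemma card_eq_card_mul_of_card_fiber_eq (f : α → β) {c : ℕ}
    (h : ∀ b, Nat.card {a // f a = b} = c) : Nat.card α = Nat.card β * c := by
  rcases Nat.eq_zero_or_pos c with rfl | hc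
  · rw [mul_zero, Nat.card_eq_zero]
    by_contra! hα
    obtain ⟨⟨a⟩, _⟩ := hα
    have : Nonempty {a' // f a' = f a} := ⟨⟨a, rfl⟩⟩
    exact Nat.card_pos.ne' (h (f a))
  · have hfiber (b) : Nonempty ({a // f a = b} ≃ Fin c) :=
      ⟨(Nat.equivFinOfCardPos ((h b).trans_ne hc.ne')).trans (finCongr (h b))⟩
    rw [← Nat.card_congr (Equiv.sigmaFiberEquiv f),
      Nat.card_congr (Equiv.sigmaCongrRight fun b => (hfiber b).some),
      Nat.card_congr (Equiv.sigmaEquivProd _ _), Nat.card_prod, Nat.card_fin]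

end Fibres

section CardTruncation

open Polynomial

variable {R : Type*} [CommRing R] {J E : ℕ → Ideal R}

lemma isTruncation_one_iff {L : Submodule R R[X]} :
    IsTruncation J 1 L ↔ L = Submodule.map (monomial 0) (J 0) := by
  constructor
  · intro h
    refine le_antisymm (fun f hf => ?_) ?_
    · refine ⟨f.coeff 0, h.lead 0 zero_lt_one ▸ mem_leadIdeal.2 ⟨f, hf, h.le hf, rfl⟩, ?_⟩
      rw [monomial_zero_left, ← eq_C_of_degree_le_zero]
      simpa [mem_degreeLT, Nat.WithBot.lt_one_iff_le_zero] using h.le hf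
    · rintro _ ⟨c, hc, rfl⟩
      exact h.monomial_mem zero_lt_one hc
  · rintro rfl
    have hle : Submodule.map (monomial 0) (J 0) ≤ degreeLT R 1 := by
      rintro _ ⟨c, -, rfl⟩
      exact monomial_coe_mem_degreeLT (0 : Fin 1) c
    refine ⟨hle, ?_, fun j hj => ?_⟩
    · rintro _ ⟨c, -, rfl⟩ hX
      have hc : c = 0 := by simpa [X_mul_monomial] using mem_degreeLT_iff_coeff.1 hX 1 le_rfl
      simp [hc]
    · obtain rfl := Nat.lt_one_iff.1 hj
      rw [leadIdeal, inf_of_le_left hle, ← Submodule.map_comp]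
      convert Submodule.map_id (J 0)
      ext
      simp

theorem card_isTruncation [IsDedekindDomain R] (hJ : ∀ j, E j * J (j + 1) = J j)
    (hE : ∀ j, E j ≠ ⊥) (hJbot : ∀ j, J j ≠ ⊥) (hfin : ∀ j, Finite (R ⧸ J j)) (m : ℕ) :
    Nat.card {L // IsTruncation J (m + 1) L} =
      ∏ i ∈ Finset.range m, Nat.card (R ⧸ E i) ^ (i + 1) := by
  induction m with
  | zero => simp [isTruncation_one_iff]
  | succ m ih =>
    let restrict (P : {P // IsTruncation J (m + 2) P}) : {L // IsTruncation J (m + 1) L} :=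
      ⟨P ⊓ degreeLT R (m + 1), P.2.inf_degreeLT⟩
    rw [Finset.prod_range_succ, ← ih]
    refine card_eq_card_mul_of_card_fiber_eq restrict fun L => ?_
    rw [← L.2.card_extensions hJ hE hJbot hfin]
    exact Nat.card_congr <| (Equiv.subtypeEquivRight fun P => Subtype.ext_iff).trans
      (Equiv.subtypeSubtypeEquivSubtypeInter _ fun P => P ⊓ degreeLT R (m + 1) = L)

end CardTruncation

section IdealsOfTruncations

open Polynomial

variable {R : Type*} [CommRing R] {J : ℕ → Ideal R} {K : ℕ}

lemma isTruncation_ofPolynomial {I : Ideal R[X]} (hI : ∀ j, I.leadingCoeffNth j = J j) (k : ℕ) :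
    IsTruncation J k (I.ofPolynomial ⊓ degreeLT R k) where
  le := inf_le_right
  shift _ hf hX := ⟨I.mul_mem_left X hf.1, hX⟩
  lead j hj := by rw [leadIdeal_inf_degreeLT _ hj, leadIdeal_ofPolynomial, hI]

lemma exists_ideal_ofPolynomial_eq {S : Submodule R R[X]} (hX : ∀ p ∈ S, X * p ∈ S) :
    ∃ I : Ideal R[X], I.ofPolynomial = S := by
  refine ⟨{ S with smul_mem' := fun q p hp => ?_ }, rfl⟩
  change q * p ∈ S
  induction q using Polynomial.induction_on' with
  | add a b ha hb => exact add_mul a b p ▸ add_mem ha hb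
  | monomial n a =>
    rw [← C_mul_X_pow_eq_monomial, mul_assoc, C_mul']
    refine S.smul_mem a ?_
    induction n with
    | zero => simpa using hp
    | succ n ih =>
      rw [pow_succ', mul_assoc]
      exact hX _ ih

lemma modByMonic_mem_iff_mem {I : Ideal R[X]} {f : R[X]} (hf : f ∈ I) (p : R[X]) :
    p %ₘ f ∈ I ↔ p ∈ I := by
  rw [modByMonic_eq_sub_mul_div]
  exact I.sub_mem_iff_left (I.mul_mem_right _ hf)

lemma X_mul_modByMonic_modByMonic {f : R[X]} (hf : f.Monic) (p : R[X]) :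
    (X * (p %ₘ f)) %ₘ f = (X * p) %ₘ f := by
  rw [eq_comm, ← sub_eq_zero, ← sub_modByMonic, ← mul_sub, modByMonic_eq_zero_iff_dvd hf]
  refine Dvd.dvd.mul_left ⟨p /ₘ f, ?_⟩ X
  rw [modByMonic_eq_sub_mul_div, sub_sub_cancel]

lemma IsTruncation.leadingCoeffNth_eq {I : Ideal R[X]}
    (h : IsTruncation J (K + 1) (I.ofPolynomial ⊓ degreeLT R (K + 1))) (hJ : Monotone J)
    (hK : J K = ⊤) (j : ℕ) : I.leadingCoeffNth j = J j := by
  have hlead : ∀ j < K + 1, I.leadingCoeffNth j = J j := fun j hj => by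
    rw [← leadIdeal_ofPolynomial, ← leadIdeal_inf_degreeLT _ hj, h.lead j hj]
  rcases Nat.lt_or_ge j (K + 1) with hj | hj
  · exact hlead j hj
  · have hKj : K ≤ j := by lia
    have hJj : J j = ⊤ := eq_top_iff.2 (hK ▸ hJ hKj)
    rw [hJj, eq_top_iff, ← hK, ← hlead K K.lt_succ_self]
    exact I.leadingCoeffNth_mono hKj

variable [Nontrivial R]

lemma exists_monic_of_leadIdeal_eq_top {L : Submodule R R[X]} (h : leadIdeal L K = ⊤) :
    ∃ f ∈ L, f.Monic ∧ f.degree = K := by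
  obtain ⟨f, hf, hd, hc⟩ := mem_leadIdeal.1 ((Ideal.eq_top_iff_one _).1 h)
  have hle : f.natDegree ≤ K :=
    natDegree_le_iff_coeff_eq_zero.2 fun _ => mem_degreeLT_iff_coeff.1 hd _
  have hmonic : f.Monic := monic_of_natDegree_le_of_coeff_eq_one K hle hc
  refine ⟨f, hf, hmonic, (natDegree_le_iff_degree_le.1 hle).antisymm (le_degree_of_ne_zero ?_)⟩
  exact hc ▸ one_ne_zero

lemma modByMonic_mem_degreeLT {f : R[X]} (hf : f.Monic) (hd : f.degree = K) (p : R[X]) :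
    p %ₘ f ∈ degreeLT R K :=
  mem_degreeLT.2 (hd ▸ degree_modByMonic_lt p hf)

lemma card_quotient_eq_prod_leadingCoeffNth {I : Ideal R[X]} (h : I.leadingCoeffNth K = ⊤) :
    Nat.card (R[X] ⧸ I) = ∏ j ∈ Finset.range K, Nat.card (R ⧸ I.leadingCoeffNth j) := by
  rw [← leadIdeal_ofPolynomial] at h
  obtain ⟨f, hfI, hf, hd⟩ := exists_monic_of_leadIdeal_eq_top h
  have hsup : (degreeLT R K).toAddSubgroup ⊔ I.ofPolynomial.toAddSubgroup = ⊤ :=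
    eq_top_iff.2 fun p _ => AddSubgroup.mem_sup.2 ⟨p %ₘ f, modByMonic_mem_degreeLT hf hd p,
      f * (p /ₘ f), I.mul_mem_right _ hfI, modByMonic_add_div p f⟩
  simp_rw [← leadIdeal_ofPolynomial]
  rw [← relIndex_degreeLT, ← AddSubgroup.relIndex_sup_right, hsup, AddSubgroup.relIndex_top_right]
  rfl

lemma ideal_le_of_inf_degreeLT_le {I I' : Ideal R[X]} (hI : I.leadingCoeffNth K = ⊤)
    (h : I.ofPolynomial ⊓ degreeLT R (K + 1) ≤ I'.ofPolynomial) : I ≤ I' := by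
  rw [← leadIdeal_ofPolynomial] at hI
  obtain ⟨f, hfI, hf, hd⟩ := exists_monic_of_leadIdeal_eq_top hI
  have hfd : f ∈ degreeLT R (K + 1) := mem_degreeLT.2 (hd ▸ mod_cast K.lt_succ_self)
  intro p hp
  refine (modByMonic_mem_iff_mem (h ⟨hfI, hfd⟩) p).1 (h ⟨(modByMonic_mem_iff_mem hfI p).2 hp, ?_⟩)
  exact degreeLT_mono K.le_succ (modByMonic_mem_degreeLT hf hd p)

lemma modByMonic_eq_sub_smul {f s : R[X]} (hf : f.Monic) (hd : f.degree = K)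
    (hs : s ∈ degreeLT R (K + 1)) : s %ₘ f = s - s.coeff K • f := by
  have hfd : f ∈ degreeLT R (K + 1) := mem_degreeLT.2 (hd ▸ mod_cast K.lt_succ_self)
  have hfK : f.coeff K = 1 := natDegree_eq_of_degree_eq_some hd ▸ hf
  have hsub : s - s.coeff K • f ∈ degreeLT R K := by
    rw [← degreeLT_succ_inf_ker_lcoeff K]
    exact ⟨sub_mem hs (Submodule.smul_mem _ _ hfd), by simp [hfK]⟩
  have hself : (s - s.coeff K • f) %ₘ f = s - s.coeff K • f :=
    (modByMonic_eq_self_iff hf).2 (hd ▸ mem_degreeLT.1 hsub)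
  rw [← hself, sub_modByMonic, smul_modByMonic,
    modByMonic_self hf, smul_zero, sub_zero]

-- Modulo a monic `f ∈ L` of degree `K`, every polynomial is determined by its remainder, so the
-- ideal attached to `L` is `{p | p %ₘ f ∈ L}`.
lemma IsTruncation.exists_ideal_inf_degreeLT_eq {L : Submodule R R[X]}
    (h : IsTruncation J (K + 1) L) (hK : J K = ⊤) :
    ∃ I : Ideal R[X], I.ofPolynomial ⊓ degreeLT R (K + 1) = L := by
  obtain ⟨f, hfL, hf, hd⟩ :=
    exists_monic_of_leadIdeal_eq_top ((h.lead K K.lt_succ_self).trans hK)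
  have hmod : ∀ s ∈ degreeLT R (K + 1), s %ₘ f ∈ L ↔ s ∈ L := fun s hs => by
    rw [modByMonic_eq_sub_smul hf hd hs]
    exact L.sub_mem_iff_left (L.smul_mem _ hfL)
  obtain ⟨I, hI⟩ := exists_ideal_ofPolynomial_eq (S := L.comap (modByMonicHom f)) <| by
    intro p (hp : p %ₘ f ∈ L)
    have hX : X * (p %ₘ f) ∈ degreeLT R (K + 1) :=
      X_mul_mem_degreeLT_succ_iff.2 (modByMonic_mem_degreeLT hf hd p)
    change (X * p) %ₘ f ∈ L
    rw [← X_mul_modByMonic_modByMonic hf, hmod _ hX]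
    exact h.shift _ hp hX
  refine ⟨I, ?_⟩
  rw [hI]
  ext s
  exact ⟨fun hs => (hmod s hs.2).1 hs.1, fun hs => ⟨(hmod s (h.le hs)).2 hs, h.le hs⟩⟩

theorem card_ideals_eq_card_isTruncation (hJ : Monotone J) (hK : J K = ⊤) :
    Nat.card {I : Ideal R[X] // ∀ j, I.leadingCoeffNth j = J j} =
      Nat.card {L : Submodule R R[X] // IsTruncation J (K + 1) L} := by
  refine Nat.card_eq_of_bijective
    (fun I => ⟨I.1.ofPolynomial ⊓ degreeLT R (K + 1), isTruncation_ofPolynomial I.2 _⟩) ⟨?_, ?_⟩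
  · intro I I' hII'
    have heq := congrArg Subtype.val hII'
    exact Subtype.ext (le_antisymm
      (ideal_le_of_inf_degreeLT_le ((I.2 K).trans hK) (heq.le.trans inf_le_left))
      (ideal_le_of_inf_degreeLT_le ((I'.2 K).trans hK) (heq.ge.trans inf_le_left)))
  · rintro ⟨L, hL⟩
    obtain ⟨I, rfl⟩ := hL.exists_ideal_inf_degreeLT_eq hK
    exact ⟨⟨I, hL.leadingCoeffNth_eq hJ hK⟩, rfl⟩

end IdealsOfTruncations

section FiniteSeq

lemma finprod_nat_eq_zero_mul {M : Type*} [CommMonoid M] {f : ℕ → M}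
    (hf : (Function.mulSupport f).Finite) : ∏ᶠ j, f j = f 0 * ∏ᶠ j, f (j + 1) := by
  obtain ⟨B, hB⟩ := hf.bddAbove
  have hlt {j : ℕ} (hj : f j ≠ 1) : j < B + 1 := Nat.lt_succ_of_le (hB hj)
  rw [finprod_eq_prod_of_mulSupport_subset (s := Finset.range (B + 1)) f fun j hj => by
      simpa using hlt hj,
    finprod_eq_prod_of_mulSupport_subset (s := Finset.range B) _ fun j hj => by
      simpa using hlt (j := j + 1) hj,
    Finset.prod_range_succ', mul_comm]

lemma prod_range_eq_prod_pow_mul_pow {M : Type*} [CommMonoid M] {E J : ℕ → M}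
    (h : ∀ j, E j * J (j + 1) = J j) (m : ℕ) :
    ∏ j ∈ Finset.range m, J j = (∏ i ∈ Finset.range m, E i ^ (i + 1)) * J m ^ m := by
  induction m with
  | zero => simp
  | succ m ih =>
    rw [Finset.prod_range_succ, ih, Finset.prod_range_succ, mul_assoc, ← pow_succ, ← h m, mul_pow,
      mul_assoc]

/-- Sequences in `D` with only finitely many terms different from `1`. -/
def FiniteSeq (D : Type*) [One D] : Type _ := {E : ℕ → D // (Function.mulSupport E).Finite}

namespace FiniteSeq

variable {D : Type*} [CommMonoid D]

instance : CoeFun (FiniteSeq D) fun _ => ℕ → D := ⟨Subtype.val⟩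

lemma eventually_eq_one (E : FiniteSeq D) : ∀ᶠ k in atTop, E k = 1 := by
  rw [← Nat.cofinite_eq_atTop]
  exact E.2

/-- The divisibility chain `E k * E (k + 1) * ⋯` with successive quotients `E k`. -/
noncomputable def chain (E : FiniteSeq D) (k : ℕ) : D := ∏ᶠ j, E (j + k)

lemma mul_chain_succ (E : FiniteSeq D) (k : ℕ) : E k * E.chain (k + 1) = E.chain k := by
  have hfin : (Function.mulSupport fun j => E (j + k)).Finite :=
    E.2.preimage (add_left_injective k).injOn
  rw [chain, chain, finprod_nat_eq_zero_mul hfin, zero_add]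
  simp only [add_assoc, add_comm 1 k]

lemma eventually_chain_eq_one (E : FiniteSeq D) : ∀ᶠ k in atTop, E.chain k = 1 := by
  obtain ⟨K, hK⟩ := eventually_atTop.1 E.eventually_eq_one
  filter_upwards [eventually_ge_atTop K] with k hk
  exact finprod_eq_one_of_forall_eq_one fun j => hK _ (by lia)

lemma chain_eq_of_forall_mul_succ (E : FiniteSeq D) {J : ℕ → D} (hJ : ∀ k, E k * J (k + 1) = J k)
    (hone : ∀ᶠ k in atTop, J k = 1) : E.chain = J := by
  obtain ⟨K, hK⟩ := eventually_atTop.1 (E.eventually_chain_eq_one.and hone)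
  have hge : ∀ k, K ≤ k → E.chain k = J k := fun k hk => (hK k hk).1.trans (hK k hk).2.symm
  funext k
  rcases le_total K k with hk | hk
  · exact hge k hk
  · induction hk using Nat.decreasingInduction with
    | self => exact hge K le_rfl
    | of_succ k _ ih => rw [← E.mul_chain_succ, ih, hJ]

lemma exists_chain_eq {J : ℕ → D} (hJ : ∀ k, J (k + 1) ∣ J k) (hone : ∀ᶠ k in atTop, J k = 1) :
    ∃ E : FiniteSeq D, E.chain = J := by
  choose E hE using hJ
  have hfin : ∀ᶠ k in cofinite, E k = 1 := by
    rw [Nat.cofinite_eq_atTop]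
    filter_upwards [hone, (tendsto_add_atTop_nat 1).eventually hone] with k hk hk1
    rw [← hk, hE k, hk1, one_mul]
  refine ⟨⟨E, hfin⟩, chain_eq_of_forall_mul_succ _ (fun k => ?_) hone⟩
  exact (mul_comm _ _).trans (hE k).symm

lemma chain_injective [IsCancelMul D] : Function.Injective (chain : FiniteSeq D → ℕ → D) := by
  intro E E' h
  refine Subtype.ext (funext fun k => mul_right_cancel (b := E'.chain (k + 1)) ?_)
  rw [E'.mul_chain_succ, ← h]
  exact E.mul_chain_succ k

/-- The product `∏ j, N (E j) ^ (j + s)`: the index of an ideal with chain `E.chain` for `s = 1`,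
and what the tail of a sequence contributes to it for `s = 2`. -/
noncomputable def weight (N : D →* ℕ) (s : ℕ) (E : FiniteSeq D) : ℕ := ∏ᶠ j, N (E j) ^ (j + s)

lemma mulSupport_pow_subset (N : D →* ℕ) (s : ℕ) (E : FiniteSeq D) :
    (Function.mulSupport fun j => N (E j) ^ (j + s)) ⊆ Function.mulSupport E := by
  refine fun j hj hE => hj ?_
  simp only [hE, map_one, one_pow]

lemma weight_eq_prod_range (N : D →* ℕ) (s : ℕ) (E : FiniteSeq D) {K : ℕ}
    (hK : ∀ k, K ≤ k → E k = 1) : E.weight N s = ∏ j ∈ Finset.range K, N (E j) ^ (j + s) := by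
  refine finprod_eq_prod_of_mulSupport_subset _ ((E.mulSupport_pow_subset N s).trans fun j hj => ?_)
  simpa using mt (hK j) hj

end FiniteSeq

end FiniteSeq

section ChainsOfIdeals

open Polynomial
open scoped nonZeroDivisors

variable (R : Type*) [CommRing R] [IsDedekindDomain R] [Module.Free ℤ R]

/-- The absolute norm on the monoid of nonzero ideals. -/
noncomputable def idealNorm : (Ideal R)⁰ →* ℕ :=
  (Ideal.absNorm : Ideal R →*₀ ℕ).toMonoidHom.comp (Ideal R)⁰.subtype

variable {R}

lemma idealNorm_eq_card (D : (Ideal R)⁰) : idealNorm R D = Nat.card (R ⧸ (D : Ideal R)) := rfl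

variable (E : FiniteSeq (Ideal R)⁰)

lemma card_ideals_of_leadingCoeffNth_eq_chain [Module.Finite ℤ R] :
    Nat.card {I : Ideal R[X] // ∀ j, I.leadingCoeffNth j = E.chain j} =
      E.weight (idealNorm R) 1 := by
  obtain ⟨K, hK⟩ := eventually_atTop.1 (E.eventually_eq_one.and E.eventually_chain_eq_one)
  have hmul (j : ℕ) : (E j : Ideal R) * E.chain (j + 1) = E.chain j :=
    congrArg Subtype.val (E.mul_chain_succ j)
  have hmono : Monotone fun j => (E.chain j : Ideal R) :=
    monotone_nat_of_le_succ fun j => hmul j ▸ Ideal.mul_le_right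
  have htop : (E.chain K : Ideal R) = ⊤ := by simp [(hK K le_rfl).2]
  have hne (D : (Ideal R)⁰) : (D : Ideal R) ≠ ⊥ := nonZeroDivisors.coe_ne_zero D
  have hfin (j : ℕ) : Finite (R ⧸ (E.chain j : Ideal R)) :=
    Ideal.finiteQuotientOfFreeOfNeBot _ (hne (E.chain j))
  rw [card_ideals_eq_card_isTruncation hmono htop,
    card_isTruncation (J := fun j => (E.chain j : Ideal R)) (E := fun j => (E j : Ideal R)) hmul
      (fun j => hne (E j)) (fun j => hne (E.chain j)) hfin,
    E.weight_eq_prod_range _ _ fun k hk => (hK k hk).1]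
  simp only [idealNorm_eq_card]

lemma card_quotient_of_leadingCoeffNth_eq_chain {I : Ideal R[X]}
    (hI : ∀ j, I.leadingCoeffNth j = E.chain j) :
    Nat.card (R[X] ⧸ I) = E.weight (idealNorm R) 1 := by
  obtain ⟨K, hK⟩ := eventually_atTop.1 (E.eventually_eq_one.and E.eventually_chain_eq_one)
  have htop : I.leadingCoeffNth K = ⊤ := by simp [hI, (hK K le_rfl).2]
  have hmul (j : ℕ) :
      idealNorm R (E j) * idealNorm R (E.chain (j + 1)) = idealNorm R (E.chain j) := by
    rw [← map_mul, E.mul_chain_succ]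
  simp only [card_quotient_eq_prod_leadingCoeffNth htop, hI, ← idealNorm_eq_card]
  rw [prod_range_eq_prod_pow_mul_pow hmul, (hK K le_rfl).2, map_one, one_pow, mul_one,
    E.weight_eq_prod_range _ _ fun k hk => (hK k hk).1]

end ChainsOfIdeals

section FiniteIndex

open Polynomial
open scoped nonZeroDivisors

variable {R : Type*} [CommRing R] (I : Ideal R[X]) [Finite (R[X] ⧸ I)]

lemma leadingCoeffNth_zero_ne_bot [Infinite R] : I.leadingCoeffNth 0 ≠ ⊥ := by
  obtain ⟨x, y, hxy, h⟩ := Finite.exists_ne_map_eq_of_infinite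
    fun c : R => Ideal.Quotient.mk I (C c)
  refine Submodule.ne_bot_iff _ |>.2 ⟨x - y, ?_, sub_ne_zero.2 hxy⟩
  rw [Ideal.mem_leadingCoeffNth_zero, map_sub]
  exact Ideal.Quotient.eq.1 h

lemma exists_leadingCoeffNth_eq_top : ∃ K, I.leadingCoeffNth K = ⊤ := by
  obtain ⟨a, b, hab, h⟩ := Set.finite_univ.exists_lt_map_eq_of_forall_mem
    (f := fun n : ℕ => Ideal.Quotient.mk I (X ^ n)) fun _ => Set.mem_univ _
  refine ⟨b, ?_⟩
  rw [← leadIdeal_ofPolynomial, Ideal.eq_top_iff_one, mem_leadIdeal]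
  refine ⟨X ^ b - X ^ a, Ideal.Quotient.eq.1 h.symm, ?_, by simp [coeff_X_pow, hab.ne']⟩
  rw [mem_degreeLT_iff_coeff]
  intro m hm
  rw [coeff_sub, coeff_X_pow, coeff_X_pow, if_neg (by lia), if_neg (by lia), sub_zero]

lemma exists_chain_eq_leadingCoeffNth [IsDedekindDomain R] [Infinite R] :
    ∃ E : FiniteSeq (Ideal R)⁰, ∀ j, I.leadingCoeffNth j = E.chain j := by
  obtain ⟨K, hK⟩ := exists_leadingCoeffNth_eq_top I
  have hne (j : ℕ) : I.leadingCoeffNth j ∈ (Ideal R)⁰ := mem_nonZeroDivisors_of_ne_zero <|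
    ne_bot_of_le_ne_bot (leadingCoeffNth_zero_ne_bot I) (I.leadingCoeffNth_mono j.zero_le)
  obtain ⟨E, hE⟩ : ∃ E : FiniteSeq (Ideal R)⁰, E.chain = fun j => ⟨_, hne j⟩ := by
    refine FiniteSeq.exists_chain_eq (fun j => ?_) ?_
    · obtain ⟨A, hA⟩ := Ideal.dvd_iff_le.2 (I.leadingCoeffNth_mono j.le_succ)
      exact ⟨⟨A, (mul_mem_nonZeroDivisors.1 (hA ▸ hne j)).2⟩, Subtype.ext hA⟩
    · filter_upwards [eventually_ge_atTop K] with j hj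
      have htop : I.leadingCoeffNth j = ⊤ := eq_top_iff.2 (hK ▸ I.leadingCoeffNth_mono hj)
      exact Subtype.ext (htop.trans Ideal.one_eq_top.symm)
  exact ⟨E, fun j => by rw [hE]⟩

end FiniteIndex

section CardIdeals

open Polynomial
open scoped nonZeroDivisors

variable {R : Type*} [CommRing R] [IsDedekindDomain R] [Module.Free ℤ R] [Module.Finite ℤ R]

instance : IsCancelMul (Ideal R)⁰ where
  mul_left_cancel A _ _ h :=
    Subtype.ext (mul_left_cancel₀ (nonZeroDivisors.coe_ne_zero A) (congrArg Subtype.val h))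
  mul_right_cancel A _ _ h :=
    Subtype.ext (mul_right_cancel₀ (nonZeroDivisors.coe_ne_zero A) (congrArg Subtype.val h))

theorem card_ideals_of_card_quotient_eq {n : ℕ} (hn : n ≠ 0) :
    Nat.card {I : Ideal R[X] // Nat.card (R[X] ⧸ I) = n} =
      n * Nat.card {E : FiniteSeq (Ideal R)⁰ // E.weight (idealNorm R) 1 = n} := by
  have : Infinite R := Module.Free.infinite ℤ R
  have hex (I : {I : Ideal R[X] // Nat.card (R[X] ⧸ I) = n}) :
      ∃ E : FiniteSeq (Ideal R)⁰, ∀ j, I.1.leadingCoeffNth j = E.chain j :=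
    have : Finite (R[X] ⧸ I.1) := Nat.finite_of_card_ne_zero (I.2.trans_ne hn)
    exists_chain_eq_leadingCoeffNth I.1
  choose quotients hquotients using hex
  have hiff (I E) : quotients I = E ↔ ∀ j, I.1.leadingCoeffNth j = E.chain j := by
    refine ⟨fun h => h ▸ hquotients I, fun h => FiniteSeq.chain_injective (funext fun j => ?_)⟩
    exact Subtype.ext ((hquotients I j).symm.trans (h j))
  rw [mul_comm]
  refine card_eq_card_mul_of_card_fiber_eq (fun I => ⟨quotients I,
    (card_quotient_of_leadingCoeffNth_eq_chain _ (hquotients I)).symm.trans I.2⟩) fun E => ?_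
  · simp only [Subtype.ext_iff, hiff]
    refine (Nat.card_congr (Equiv.subtypeSubtypeEquivSubtype
      (q := fun I : Ideal R[X] => ∀ j, I.leadingCoeffNth j = E.1.chain j) fun h => ?_)).trans
      ((card_ideals_of_leadingCoeffNth_eq_chain E.1).trans E.2)
    exact (card_quotient_of_leadingCoeffNth_eq_chain E.1 h).trans E.2

end CardIdeals

section Counting

/-- The counting function `#{a | v a ≤ x}`; its value is `0` where this set is infinite. -/
noncomputable def countLE {α : Type*} (v : α → ℕ) (x : ℝ) : ℕ := Nat.card {a // (v a : ℝ) ≤ x}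

lemma card_sigma_eq_tsum {β : Type*} {F : β → Type*} [Finite (Σ b, F b)] :
    (Nat.card (Σ b, F b) : ℝ) = ∑' b, (Nat.card (F b) : ℝ) := by
  have hF (b : β) : Finite (F b) := Finite.of_injective (Sigma.mk b) sigma_mk_injective
  calc (Nat.card (Σ b, F b) : ℝ) = ∑' _ : Σ b, F b, (1 : ℝ) := by simp [tsum_const]
    _ = ∑' b, ∑' _ : F b, (1 : ℝ) := Summable.tsum_sigma' (fun b => .of_finite) .of_finite
    _ = ∑' b, (Nat.card (F b) : ℝ) := by simp only [tsum_const, nsmul_eq_mul, mul_one]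

variable {α β : Type*} {v : α → ℕ} {w : β → ℕ}

lemma countLE_mono (hfin : ∀ x : ℝ, Finite {a // (v a : ℝ) ≤ x}) : Monotone (countLE v) := by
  intro x y hxy
  have := hfin y
  exact Nat.card_le_card_of_injective _ (Subtype.impEmbedding _ _ fun _ h => h.trans hxy).injective

lemma countLE_eq_zero (hpos : ∀ a, 0 < v a) {x : ℝ} (hx : x < 1) : countLE v x = 0 := by
  have : IsEmpty {a // (v a : ℝ) ≤ x} :=
    ⟨fun a => (a.2.trans_lt hx).not_ge (Nat.one_le_cast.2 (hpos a))⟩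
  exact Nat.card_of_isEmpty

lemma finite_fiber (hfin : ∀ x : ℝ, Finite {a // (v a : ℝ) ≤ x}) (n : ℕ) :
    Finite {a // v a = n} :=
  have := hfin n
  Finite.of_injective _
    (Subtype.impEmbedding _ (fun a => (v a : ℝ) ≤ n) fun _ h => (congrArg _ h).le).injective

lemma sum_card_fiber_eq_countLE (hpos : ∀ a, 0 < v a)
    (hfin : ∀ x : ℝ, Finite {a // (v a : ℝ) ≤ x}) (N : ℕ) :
    ∑ n ∈ Finset.Icc 1 N, Nat.card {a // v a = n} = countLE v N := by
  refine (Finset.card_preimage_eq_sum_card_image_eq fun n _ => finite_fiber hfin n).symm.trans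
    (Nat.card_congr (Equiv.subtypeEquivRight fun a => ?_))
  simp [Nat.succ_le_iff, hpos a]

lemma exists_countLE_le_mul (hpos : ∀ a, 0 < v a) (hfin : ∀ x : ℝ, Finite {a // (v a : ℝ) ≤ x})
    {κ : ℝ} (hlim : Tendsto (fun x => (countLE v x : ℝ) / x) atTop (𝓝 κ)) :
    ∃ C : ℝ, ∀ x, 0 ≤ x → (countLE v x : ℝ) ≤ C * x := by
  obtain ⟨x₀, hx₀⟩ := eventually_atTop.1
    ((hlim.eventually_le_const (lt_add_one κ)).and (eventually_ge_atTop 1))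
  have hdiv {x : ℝ} (hx : 1 ≤ x) : (countLE v x : ℝ) / x ≤ max (κ + 1) (countLE v x₀) := by
    rcases le_total x₀ x with hge | hle
    · exact (hx₀ x hge).1.trans (le_max_left _ _)
    · calc (countLE v x : ℝ) / x ≤ countLE v x := div_le_self (Nat.cast_nonneg _) hx
        _ ≤ countLE v x₀ := Nat.cast_le.2 (countLE_mono hfin hle)
        _ ≤ _ := le_max_right _ _
  refine ⟨max (κ + 1) (countLE v x₀), fun x hx => ?_⟩
  rcases lt_or_ge x 1 with hlt | hge
  · rw [countLE_eq_zero hpos hlt, Nat.cast_zero]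
    exact mul_nonneg (le_max_of_le_right (Nat.cast_nonneg _)) hx
  · exact (div_le_iff₀ (by linarith)).1 (hdiv hge)

lemma summable_inv_sq_of_countLE_le_mul (hpos : ∀ a, 0 < v a)
    (hfin : ∀ x : ℝ, Finite {a // (v a : ℝ) ≤ x}) {C : ℝ}
    (hC : ∀ x, 0 ≤ x → (countLE v x : ℝ) ≤ C * x) : Summable fun a => ((v a : ℝ) ^ 2)⁻¹ := by
  have hO : (fun N => ∑ n ∈ Finset.Icc 1 N, (Nat.card {a // v a = n} : ℝ)) =O[atTop]
      fun N => (N : ℝ) ^ (1 : ℝ) := by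
    refine .of_bound C (.of_forall fun N => ?_)
    rw [← Nat.cast_sum, sum_card_fiber_eq_countLE hpos hfin, Real.rpow_one, Real.norm_natCast,
      Real.norm_natCast]
    exact hC N N.cast_nonneg
  have hseries : Summable fun n : ℕ => (Nat.card {a // v a = n} : ℝ) * ((n : ℝ) ^ 2)⁻¹ := by
    have hL := LSeriesSummable_of_sum_norm_bigO_and_nonneg (s := 2) hO
      (fun n => Nat.cast_nonneg _) zero_le_one (by norm_num)
    refine hL.norm.congr fun n => ?_
    rcases eq_or_ne n 0 with rfl | hn
    · simp
    · simp [hn, div_eq_mul_inv]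
  have := finite_fiber hfin
  have hval (p : Σ n, {a // v a = n}) :
      ((v (Equiv.sigmaFiberEquiv v p) : ℝ) ^ 2)⁻¹ = ((p.1 : ℝ) ^ 2)⁻¹ := by
    rw [Equiv.sigmaFiberEquiv_apply, p.2.2]
  rw [← (Equiv.sigmaFiberEquiv v).summable_iff]
  refine ((summable_sigma_of_nonneg fun _ => by positivity).2 ⟨fun n => .of_finite, ?_⟩).congr
    fun p => (hval p).symm
  simpa only [tsum_const, nsmul_eq_mul] using hseries

lemma finite_le_of_summable_inv (hpos : ∀ b, 0 < w b) (hw : Summable fun b => (w b : ℝ)⁻¹)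
    (x : ℝ) : Finite {b // (w b : ℝ) ≤ x} := by
  have htop : Tendsto (fun b => (w b : ℝ)) cofinite atTop := by
    refine (tendsto_inv_nhdsGT_zero.comp
      (tendsto_nhdsWithin_iff.2 ⟨hw.tendsto_cofinite_zero, .of_forall fun b => ?_⟩)).congr
      fun b => inv_inv _
    exact inv_pos_of_pos (Nat.cast_pos.2 (hpos b) : (0 : ℝ) < w b)
  have hfin : {b | ¬x < (w b : ℝ)}.Finite := htop.eventually (eventually_gt_atTop x)
  exact (hfin.subset fun b (hb : (w b : ℝ) ≤ x) => hb.not_gt).to_subtype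

lemma finite_mul_le (hvpos : ∀ a, 0 < v a) (hvfin : ∀ x : ℝ, Finite {a // (v a : ℝ) ≤ x})
    (hwpos : ∀ b, 0 < w b) (hwfin : ∀ x : ℝ, Finite {b // (w b : ℝ) ≤ x}) (x : ℝ) :
    Finite {p : β × α // ((w p.1 * v p.2 : ℕ) : ℝ) ≤ x} := by
  have hprod : ({b | (w b : ℝ) ≤ x} ×ˢ {a | (v a : ℝ) ≤ x}).Finite :=
    Set.Finite.prod (hwfin x) (hvfin x)
  refine (hprod.subset fun p (hp : ((w p.1 * v p.2 : ℕ) : ℝ) ≤ x) => ?_).to_subtype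
  have hw : (w p.1 : ℝ) ≤ (w p.1 * v p.2 : ℕ) :=
    Nat.cast_le.2 (Nat.le_mul_of_pos_right _ (hvpos p.2))
  have hv : (v p.2 : ℝ) ≤ (w p.1 * v p.2 : ℕ) :=
    Nat.cast_le.2 (Nat.le_mul_of_pos_left _ (hwpos p.1))
  exact ⟨hw.trans hp, hv.trans hp⟩

lemma countLE_mul_eq_tsum (hwpos : ∀ b, 0 < w b) {x : ℝ}
    [Finite {p : β × α // ((w p.1 * v p.2 : ℕ) : ℝ) ≤ x}] :
    (countLE (fun p : β × α => w p.1 * v p.2) x : ℝ) = ∑' b, (countLE v (x / w b) : ℝ) := by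
  have hiff (b : β) (a : α) : ((w b * v a : ℕ) : ℝ) ≤ x ↔ (v a : ℝ) ≤ x / w b := by
    rw [le_div_iff₀' (Nat.cast_pos.2 (hwpos b)), Nat.cast_mul]
  have e : {p : β × α // ((w p.1 * v p.2 : ℕ) : ℝ) ≤ x} ≃ Σ b, {a // (v a : ℝ) ≤ x / w b} :=
    (Equiv.subtypeEquivRight fun p : β × α => hiff p.1 p.2).trans
      (Equiv.subtypeProdEquivSigmaSubtype fun b a => (v a : ℝ) ≤ x / w b)
  have := Finite.of_equiv _ e
  exact (congrArg Nat.cast (Nat.card_congr e)).trans card_sigma_eq_tsum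

lemma tendsto_countLE_mul_div (hvpos : ∀ a, 0 < v a)
    (hvfin : ∀ x : ℝ, Finite {a // (v a : ℝ) ≤ x}) (hwpos : ∀ b, 0 < w b)
    (hw : Summable fun b => (w b : ℝ)⁻¹) {κ : ℝ}
    (hlim : Tendsto (fun x => (countLE v x : ℝ) / x) atTop (𝓝 κ)) :
    Tendsto (fun x => (countLE (fun p : β × α => w p.1 * v p.2) x : ℝ) / x) atTop
      (𝓝 (∑' b, κ * (w b : ℝ)⁻¹)) := by
  obtain ⟨C, hC⟩ := exists_countLE_le_mul hvpos hvfin hlim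
  have hwpos' (b : β) : (0 : ℝ) < w b := Nat.cast_pos.2 (hwpos b)
  have hfin := finite_mul_le hvpos hvfin hwpos (finite_le_of_summable_inv hwpos hw)
  simp_rw [countLE_mul_eq_tsum hwpos, ← tsum_div_const]
  refine tendsto_tsum_of_dominated_convergence (hw.mul_left C) (fun b => ?_) ?_
  · refine ((hlim.comp (tendsto_id.atTop_div_const (hwpos' b))).mul_const (w b : ℝ)⁻¹).congr
      fun x => ?_
    have := (hwpos' b).ne'
    simp only [Function.comp_apply, id_eq]
    field_simp
  · filter_upwards [eventually_gt_atTop 0] with x hx b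
    rw [Real.norm_of_nonneg (by positivity), div_le_iff₀ hx]
    exact (hC _ (by positivity)).trans_eq (by ring)

end Counting

section PartialSummation

lemma sum_Icc_mul_eq_sub_sum_range (b : ℕ → ℝ) (N : ℕ) :
    ∑ n ∈ Finset.Icc 1 N, (n : ℝ) * b n =
      N * ∑ n ∈ Finset.Icc 1 N, b n - ∑ m ∈ Finset.range N, ∑ n ∈ Finset.Icc 1 m, b n := by
  induction N with
  | zero => simp
  | succ N ih =>
    rw [Finset.sum_Icc_succ_top (by lia), ih, Finset.sum_Icc_succ_top (by lia),
      Finset.sum_range_succ]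
    push_cast
    ring

lemma sum_range_natCast_eq (N : ℕ) : ∑ m ∈ Finset.range N, (m : ℝ) = N * (N - 1) / 2 := by
  induction N with
  | zero => simp
  | succ N ih =>
    rw [Finset.sum_range_succ, ih]
    push_cast
    ring

lemma tendsto_sum_range_natCast_div_sq :
    Tendsto (fun N : ℕ => (∑ m ∈ Finset.range N, (m : ℝ)) / (N : ℝ) ^ 2) atTop (𝓝 (1 / 2)) := by
  have hlim : Tendsto (fun N : ℕ => (1 - (N : ℝ)⁻¹) / 2) atTop (𝓝 ((1 - 0) / 2)) :=
    (tendsto_inv_atTop_nhds_zero_nat.const_sub 1).div_const 2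
  rw [sub_zero] at hlim
  refine hlim.congr' ?_
  filter_upwards [eventually_ne_atTop 0] with N hN
  rw [sum_range_natCast_eq]
  field_simp

lemma tendsto_sum_range_div_sq {f : ℕ → ℝ} {c : ℝ}
    (hf : Tendsto (fun m : ℕ => f m / (m : ℝ)) atTop (𝓝 c)) :
    Tendsto (fun N : ℕ => (∑ m ∈ Finset.range N, f m) / (N : ℝ) ^ 2) atTop (𝓝 (c / 2)) := by
  have hatTop : Tendsto (fun N : ℕ => ∑ m ∈ Finset.range N, (m : ℝ)) atTop atTop := by
    refine (tendsto_sum_range_natCast_div_sq.pos_mul_atTop one_half_pos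
      ((tendsto_pow_atTop two_ne_zero).comp tendsto_natCast_atTop_atTop)).congr' ?_
    filter_upwards [eventually_ne_atTop 0] with N hN
    exact div_mul_cancel₀ _ (by positivity)
  have herror : (fun m : ℕ => f m - c * m) =o[atTop] fun m : ℕ => (m : ℝ) := by
    refine (Asymptotics.isLittleO_iff_tendsto' ?_).2 ((sub_self c ▸ hf.sub_const c).congr' ?_)
    · filter_upwards [eventually_ne_atTop 0] with m hm hzero
      exact absurd hzero (Nat.cast_ne_zero.2 hm)
    · filter_upwards [eventually_ne_atTop 0] with m hm
      field_simp
  have hsum : (fun N => ∑ m ∈ Finset.range N, (f m - c * m)) =o[atTop] fun N => (N : ℝ) ^ 2 := by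
    refine (herror.sum_range (fun m => Nat.cast_nonneg m) hatTop).trans_isBigO
      (Asymptotics.isBigO_of_div_tendsto_nhds ?_ _ tendsto_sum_range_natCast_div_sq)
    filter_upwards [eventually_ne_atTop 0] with N hN hzero
    exact absurd hzero (by positivity)
  have hlim := hsum.tendsto_div_nhds_zero.add (tendsto_sum_range_natCast_div_sq.const_mul c)
  rw [zero_add, mul_one_div] at hlim
  refine hlim.congr fun N => ?_
  rw [Finset.sum_sub_distrib, ← Finset.mul_sum]
  ring

lemma tendsto_sum_mul_div_sq {b : ℕ → ℝ} {c : ℝ}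
    (hb : Tendsto (fun N : ℕ => (∑ n ∈ Finset.Icc 1 N, b n) / (N : ℝ)) atTop (𝓝 c)) :
    Tendsto (fun N : ℕ => (∑ n ∈ Finset.Icc 1 N, (n : ℝ) * b n) / (N : ℝ) ^ 2) atTop
      (𝓝 (c / 2)) := by
  have hlim := hb.sub (tendsto_sum_range_div_sq hb)
  rw [sub_half] at hlim
  refine hlim.congr' ?_
  filter_upwards [eventually_ne_atTop 0] with N hN
  rw [sum_Icc_mul_eq_sub_sum_range]
  field_simp

end PartialSummation

section Summability

lemma sum_prod_le_exp_sum {ι D : Type*} [Fintype ι] {g : ι → D → ℝ} {a : ι → ℝ}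
    (hg : ∀ i d, 0 ≤ g i d) (hga : ∀ i (t : Finset D), ∑ d ∈ t, g i d ≤ 1 + a i)
    (s : Finset (ι → D)) : ∑ f ∈ s, ∏ i, g i (f i) ≤ Real.exp (∑ i, a i) := by
  classical
  calc ∑ f ∈ s, ∏ i, g i (f i)
      ≤ ∑ f ∈ Fintype.piFinset fun i => s.image fun f => f i, ∏ i, g i (f i) := by
        refine Finset.sum_le_sum_of_subset_of_nonneg (fun f hf => ?_) fun f _ _ =>
          Finset.prod_nonneg fun i _ => hg i _
        exact Fintype.mem_piFinset.2 fun i => Finset.mem_image_of_mem _ hf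
    _ = ∏ i, ∑ d ∈ s.image fun f => f i, g i d := (Finset.prod_univ_sum _ _).symm
    _ ≤ ∏ i, Real.exp (a i) := by
        refine Finset.prod_le_prod (fun i _ => Finset.sum_nonneg fun d _ => hg i d) fun i _ => ?_
        exact (hga i _).trans (add_comm 1 (a i) ▸ Real.add_one_le_exp _)
    _ = Real.exp (∑ i, a i) := (Real.exp_sum _ _).symm

variable {D : Type*} [CommMonoid D] {N : D →* ℕ}

lemma pos_of_forall_two_le (hN : ∀ d, d ≠ 1 → 2 ≤ N d) (d : D) : 0 < N d := by
  rcases eq_or_ne d 1 with rfl | hd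
  · rw [map_one]
    exact one_pos
  · exact two_pos.trans_le (hN d hd)

lemma sum_inv_pow_le (hN : ∀ d, d ≠ 1 → 2 ≤ N d) (hsum : Summable fun d => ((N d : ℝ) ^ 2)⁻¹)
    (i : ℕ) (t : Finset D) :
    ∑ d ∈ t, ((N d : ℝ) ^ (i + 2))⁻¹ ≤ 1 + (∑' d, ((N d : ℝ) ^ 2)⁻¹) * (1 / 2) ^ i := by
  classical
  have hterm (d : D) :
      ((N d : ℝ) ^ (i + 2))⁻¹ ≤ (if d = 1 then 1 else 0) + ((N d : ℝ) ^ 2)⁻¹ * (1 / 2) ^ i := by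
    split_ifs with h
    · simp [h]
    · have h2 : (2 : ℝ) ≤ N d := by exact_mod_cast hN d h
      rw [zero_add, pow_add, mul_inv_rev, one_div, inv_pow]
      gcongr
  calc ∑ d ∈ t, ((N d : ℝ) ^ (i + 2))⁻¹
      ≤ (∑ d ∈ t, if d = 1 then 1 else 0) + (∑ d ∈ t, ((N d : ℝ) ^ 2)⁻¹) * (1 / 2) ^ i := by
        rw [Finset.sum_mul, ← Finset.sum_add_distrib]
        exact Finset.sum_le_sum fun d _ => hterm d
    _ ≤ 1 + (∑' d, ((N d : ℝ) ^ 2)⁻¹) * (1 / 2) ^ i := by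
        gcongr
        · rw [Finset.sum_ite_eq']
          split_ifs <;> norm_num
        · exact hsum.sum_le_tsum t fun d _ => by positivity

namespace FiniteSeq

lemma exists_forall_eq_one (s : Finset (FiniteSeq D)) :
    ∃ K, ∀ E ∈ s, ∀ k, K ≤ k → E k = 1 := by
  have h : ∀ᶠ k in atTop, ∀ E ∈ s, E k = 1 :=
    (eventually_all_finset s).2 fun E _ => E.eventually_eq_one
  obtain ⟨K, hK⟩ := eventually_atTop.1 h
  exact ⟨K, fun E hE k hk => hK k hk E hE⟩

lemma summable_finprod {g : ℕ → D → ℝ} {a : ℕ → ℝ} (hg : ∀ i d, 0 ≤ g i d)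
    (hone : ∀ i, g i 1 = 1) (hga : ∀ i (t : Finset D), ∑ d ∈ t, g i d ≤ 1 + a i)
    (ha : Summable a) : Summable fun E : FiniteSeq D => ∏ᶠ i, g i (E i) := by
  classical
  have ha0 (i : ℕ) : 0 ≤ a i := by simpa [hone] using hga i {1}
  refine summable_of_sum_le (c := Real.exp (∑' i, a i))
    (fun E => finprod_nonneg fun i => hg i (E i)) fun s => ?_
  obtain ⟨K, hK⟩ := exists_forall_eq_one s
  let initial (E : FiniteSeq D) (i : Fin K) : D := E i
  have hinj : Set.InjOn initial s := by
    refine fun E hE E' hE' h => Subtype.ext (funext fun k => ?_)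
    rcases lt_or_ge k K with hk | hk
    · exact congrFun h ⟨k, hk⟩
    · exact (hK E hE k hk).trans (hK E' hE' k hk).symm
  have hprod : ∀ E ∈ s, ∏ᶠ i, g i (E i) = ∏ i : Fin K, g i (initial E i) := fun E hE => by
    rw [Fin.prod_univ_eq_prod_range fun i => g i (E i)]
    refine finprod_eq_prod_of_mulSupport_subset _ fun i hi => ?_
    have : E i ≠ 1 := fun h => hi (by simp only [h, hone])
    simpa using mt (hK E hE i) this
  calc ∑ E ∈ s, ∏ᶠ i, g i (E i) = ∑ f ∈ s.image initial, ∏ i : Fin K, g i (f i) := by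
        rw [Finset.sum_image hinj, Finset.sum_congr rfl hprod]
    _ ≤ Real.exp (∑ i : Fin K, a i) :=
        sum_prod_le_exp_sum (fun i : Fin K => hg i) (fun i => hga i) _
    _ ≤ Real.exp (∑' i, a i) := by
        rw [Fin.sum_univ_eq_sum_range]
        exact Real.exp_le_exp.2 (ha.sum_le_tsum _ fun i _ => ha0 i)

lemma summable_inv_weight_two (hN : ∀ d, d ≠ 1 → 2 ≤ N d)
    (hsum : Summable fun d => ((N d : ℝ) ^ 2)⁻¹) :
    Summable fun E : FiniteSeq D => (E.weight N 2 : ℝ)⁻¹ := by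
  refine (summable_finprod (g := fun i d => ((N d : ℝ) ^ (i + 2))⁻¹) (fun _ _ => by positivity)
    (by simp) (sum_inv_pow_le hN hsum) (summable_geometric_two.mul_left _)).congr fun E => ?_
  simp only [weight, finprod_inv_distrib, Nat.cast_finprod', Nat.cast_pow]

lemma weight_pos (hN : ∀ d, 0 < N d) (s : ℕ) (E : FiniteSeq D) : 0 < E.weight N s :=
  finprod_induction _ one_pos (fun _ _ => mul_pos) fun j => pow_pos (hN (E j)) _

/-- A sequence corresponds to the pair of its tail and its first term. -/
def tailHeadEquiv : FiniteSeq D ≃ FiniteSeq D × D where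
  toFun E := (⟨fun k => E (k + 1), E.2.preimage (add_left_injective 1).injOn⟩, E 0)
  invFun p := ⟨fun k => Nat.casesOn k p.2 p.1, by
    refine ((p.1.2.image Nat.succ).insert 0).subset fun k hk => ?_
    cases k with
    | zero => exact .inl rfl
    | succ k => exact .inr ⟨k, hk, rfl⟩⟩
  left_inv E := Subtype.ext (funext fun k => by cases k <;> rfl)
  right_inv _ := rfl

lemma weight_one_eq_weight_two_tail_mul (E : FiniteSeq D) :
    E.weight N 1 = (tailHeadEquiv E).1.weight N 2 * N (tailHeadEquiv E).2 := by
  rw [weight, finprod_nat_eq_zero_mul (E.2.subset (E.mulSupport_pow_subset N 1)), zero_add,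
    pow_one, mul_comm]
  rfl

lemma finite_weight_one_le (hN : ∀ d, d ≠ 1 → 2 ≤ N d)
    (hfin : ∀ x : ℝ, Finite {d // (N d : ℝ) ≤ x}) (hsum : Summable fun d => ((N d : ℝ) ^ 2)⁻¹)
    (x : ℝ) : Finite {E : FiniteSeq D // (E.weight N 1 : ℝ) ≤ x} := by
  have hpos := pos_of_forall_two_le hN
  have := finite_mul_le hpos hfin (weight_pos hpos 2)
    (finite_le_of_summable_inv (weight_pos hpos 2) (summable_inv_weight_two hN hsum)) x
  have e : {E : FiniteSeq D // (E.weight N 1 : ℝ) ≤ x} ≃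
      {p : FiniteSeq D × D // ((p.1.weight N 2 * N p.2 : ℕ) : ℝ) ≤ x} :=
    tailHeadEquiv.subtypeEquiv fun E => by rw [weight_one_eq_weight_two_tail_mul]
  exact Finite.of_equiv _ e.symm

lemma tendsto_countLE_weight_one_div (hN : ∀ d, d ≠ 1 → 2 ≤ N d)
    (hfin : ∀ x : ℝ, Finite {d // (N d : ℝ) ≤ x}) (hsum : Summable fun d => ((N d : ℝ) ^ 2)⁻¹)
    {κ : ℝ} (hlim : Tendsto (fun x => (countLE N x : ℝ) / x) atTop (𝓝 κ)) :
    Tendsto (fun x => (countLE (weight N 1) x : ℝ) / x) atTop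
      (𝓝 (∑' E : FiniteSeq D, κ * (E.weight N 2 : ℝ)⁻¹)) := by
  have hpos := pos_of_forall_two_le hN
  refine (tendsto_countLE_mul_div hpos hfin (weight_pos hpos 2)
    (summable_inv_weight_two hN hsum) hlim).congr fun x => ?_
  have hcount : countLE (weight N 1) x =
      countLE (fun p : FiniteSeq D × D => p.1.weight N 2 * N p.2) x :=
    Nat.card_congr (tailHeadEquiv.subtypeEquiv fun E => by rw [weight_one_eq_weight_two_tail_mul])
  rw [hcount]

theorem exists_tendsto_sum_card_weight_one_div (hN : ∀ d, d ≠ 1 → 2 ≤ N d)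
    (hfin : ∀ x : ℝ, Finite {d // (N d : ℝ) ≤ x}) {κ : ℝ} (hκ : 0 < κ)
    (hlim : Tendsto (fun x => (countLE N x : ℝ) / x) atTop (𝓝 κ)) :
    ∃ c : ℝ, 0 < c ∧ Tendsto (fun n : ℕ => (∑ m ∈ Finset.Icc 1 n,
      (Nat.card {E : FiniteSeq D // E.weight N 1 = m} : ℝ)) / n) atTop (𝓝 c) := by
  have hpos := pos_of_forall_two_le hN
  obtain ⟨C, hC⟩ := exists_countLE_le_mul hpos hfin hlim
  have hsum := summable_inv_sq_of_countLE_le_mul hpos hfin hC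
  have hterm (E : FiniteSeq D) : 0 < κ * (E.weight N 2 : ℝ)⁻¹ :=
    mul_pos hκ (inv_pos_of_pos (Nat.cast_pos.2 (E.weight_pos hpos 2)))
  refine ⟨∑' E : FiniteSeq D, κ * (E.weight N 2 : ℝ)⁻¹, ?_, ?_⟩
  · exact ((summable_inv_weight_two hN hsum).mul_left κ).tsum_pos (fun E => (hterm E).le)
      ⟨fun _ => 1, by simp⟩ (hterm _)
  · refine ((tendsto_countLE_weight_one_div hN hfin hsum hlim).comp
      tendsto_natCast_atTop_atTop).congr fun n => ?_
    rw [Function.comp_apply, ← sum_card_fiber_eq_countLE (weight_pos hpos 1)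
      (finite_weight_one_le hN hfin hsum), Nat.cast_sum]

end FiniteSeq

end Summability

section NormAsymptotics

open scoped nonZeroDivisors

variable {R : Type*} [CommRing R] [IsDedekindDomain R] [Module.Free ℤ R] [Module.Finite ℤ R]

lemma finite_idealNorm_le (x : ℝ) : Finite {D : (Ideal R)⁰ // (idealNorm R D : ℝ) ≤ x} := by
  have : CharZero R := charZero_of_injective_algebraMap (FaithfulSMul.algebraMap_injective ℤ R)
  exact ((Ideal.finite_setOfPred_absNorm_le₀ ⌊x⌋₊).subset fun D hD => Nat.le_floor hD).to_subtype

lemma two_le_idealNorm {D : (Ideal R)⁰} (hD : D ≠ 1) : 2 ≤ idealNorm R D := by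
  have hpos : 0 < idealNorm R D := Ideal.absNorm_pos_of_nonZeroDivisors D
  have hne : idealNorm R D ≠ 1 := fun h =>
    hD (Subtype.ext ((Ideal.absNorm_eq_one_iff.1 h).trans Ideal.one_eq_top.symm))
  lia

lemma tendsto_countLE_idealNorm_div (K : Type*) [Field K] [NumberField K] :
    Tendsto (fun x => (countLE (idealNorm (𝓞 K)) x : ℝ) / x) atTop
      (𝓝 (dedekindZeta_residue K)) := by
  rw [dedekindZeta_residue_def]
  exact NumberField.Ideal.tendsto_norm_le_div_atTop₀ K

end NormAsymptotics

/-- The number of ideals of `O_K[X]` of index at most `N` grows like `c·N²` for some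
constant `c > 0`. -/
theorem ideal_count_polynomial_ringOfIntegers_asymptotic (K : Type*) [Field K] [NumberField K] :
    ∃ c : ℝ, 0 < c ∧
      Tendsto (fun N : ℕ => (∑ n ∈ Finset.Icc 1 N,
          (Nat.card {I : Ideal (Polynomial (𝓞 K)) //
            Nat.card (Polynomial (𝓞 K) ⧸ I) = n} : ℝ)) / (N : ℝ) ^ 2)
        atTop (𝓝 c) := by
  obtain ⟨c, hc, hlim⟩ := FiniteSeq.exists_tendsto_sum_card_weight_one_div
    (N := idealNorm (𝓞 K)) (fun _ => two_le_idealNorm) finite_idealNorm_le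
    (dedekindZeta_residue_pos K) (tendsto_countLE_idealNorm_div K)
  refine ⟨c / 2, half_pos hc, (tendsto_sum_mul_div_sq hlim).congr fun N => ?_⟩
  congr 1
  refine Finset.sum_congr rfl fun n hn => ?_
  rw [card_ideals_of_card_quotient_eq (Nat.pos_iff_ne_zero.1 (Finset.mem_Icc.1 hn).1),
    Nat.cast_mul]
end

section
/- Let R be a commutative ring with identity and let m, n be coprime positive integers. Then the map (J, J') ↦ J ∩ J' is a bijection from the set of pairs (J, J') where J is an ideal of R with |R/J| = m and J' is an ideal of R with |R/J'| = n, onto the set of ideals I of R with |R/I| = m·n. In particular, a_{mn}(R) = a_m(R)·a_n(R). -/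
/-!
Ideals are the submodules of `R` over itself, and the argument works for submodules of any module.
By Lagrange, `k` kills the quotient by a submodule of index `k`. If coprime `m` and `n` kill `M ⧸ P`
and `M ⧸ Q`, then `P` and `Q` span `M`, so the index of `P ⊓ Q` is the product of their indices.
The inverse map sends `N` to the pair `{x | n • x ∈ N}`, `{x | m • x ∈ N}`: writing
`x = u • m • x + v • n • x` shows that these two submodules meet in `N`. If `N` has index `m * n`,
their indices have product `m * n`; the first quotient is killed by `m`, so its order divides a
power of `m` and is coprime to `n`, and symmetrically for the second. So the indices are `m`
and `n`.
-/

theorem eq_and_eq_of_mul_eq_mul_of_coprime {a b m n : ℕ} (h : a * b = m * n)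
    (han : a.Coprime n) (hbm : b.Coprime m) : a = m ∧ b = n := by
  refine ⟨Nat.dvd_antisymm (han.dvd_of_dvd_mul_right ?_) (hbm.symm.dvd_of_dvd_mul_right ?_),
    Nat.dvd_antisymm (hbm.dvd_of_dvd_mul_left ?_) (han.symm.dvd_of_dvd_mul_left ?_)⟩
  · exact h ▸ dvd_mul_right a b
  · exact h ▸ dvd_mul_right m n
  · exact h ▸ dvd_mul_left b a
  · exact h ▸ dvd_mul_left n m

section AddGroup

theorem mem_of_coprime_of_nsmul_mem {A S : Type*} [AddGroup A] [SetLike S A] [AddSubgroupClass S A]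
    {s : S} {m n : ℕ} (hmn : m.Coprime n) {x : A} (hm : m • x ∈ s) (hn : n • x ∈ s) : x ∈ s := by
  obtain ⟨u, v, huv⟩ := Nat.isCoprime_iff_coprime.mpr hmn
  have hx : x = u • m • x + v • n • x := by
    rw [← natCast_zsmul, ← natCast_zsmul, ← mul_zsmul, ← mul_zsmul, ← add_zsmul, huv, one_zsmul]
  rw [hx]
  exact add_mem (zsmul_mem hm u) (zsmul_mem hn v)

theorem index_inf_of_codisjoint {A : Type*} [AddGroup A] {H K : AddSubgroup A} [H.Normal]
    (h : Codisjoint H K) : (H ⊓ K).index = H.index * K.index := by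
  calc (H ⊓ K).index
      = H.relIndex K * K.index := by
        simpa only [inf_top_eq, AddSubgroup.relIndex_top_right] using
          (AddSubgroup.relIndex_inf_mul_relIndex H K ⊤).symm
    _ = H.index * K.index := by
        rw [← AddSubgroup.relIndex_sup_left, h.eq_top, AddSubgroup.relIndex_top_right]

theorem coprime_card_of_nsmul_eq_zero {A : Type*} [AddCommGroup A] [AddGroup.FG A] {m n : ℕ}
    (hmn : m.Coprime n) (hA : ∀ x : A, m • x = 0) : (Nat.card A).Coprime n :=
  (hmn.pow_left _).coprime_dvd_left (card_dvd_exponent_nsmul_rank' A hA)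

end AddGroup

section Submodule

variable {R M : Type*} [Ring R] [AddCommGroup M] [Module R M]

theorem nsmul_card_quotient_mem (N : Submodule R M) (x : M) : Nat.card (M ⧸ N) • x ∈ N :=
  N.toAddSubgroup.nsmul_index_mem x

theorem codisjoint_of_coprime_of_nsmul_mem {m n : ℕ} (hmn : m.Coprime n) {P Q : Submodule R M}
    (hP : ∀ x, m • x ∈ P) (hQ : ∀ x, n • x ∈ Q) : Codisjoint P Q :=
  codisjoint_iff.mpr <| Submodule.eq_top_iff'.mpr fun x ↦
    mem_of_coprime_of_nsmul_mem hmn (Submodule.mem_sup_left (hP x)) (Submodule.mem_sup_right (hQ x))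

theorem card_quotient_inf_of_codisjoint {P Q : Submodule R M} (h : Codisjoint P Q) :
    Nat.card (M ⧸ P ⊓ Q) = Nat.card (M ⧸ P) * Nat.card (M ⧸ Q) := by
  refine index_inf_of_codisjoint (H := P.toAddSubgroup) (K := Q.toAddSubgroup) ?_
  rw [codisjoint_iff, ← Submodule.sup_toAddSubgroup, h.eq_top, Submodule.top_toAddSubgroup]

theorem card_quotient_inf_of_coprime {m n : ℕ} (hmn : m.Coprime n) {P Q : Submodule R M}
    (hP : ∀ x, m • x ∈ P) (hQ : ∀ x, n • x ∈ Q) :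
    Nat.card (M ⧸ P ⊓ Q) = Nat.card (M ⧸ P) * Nat.card (M ⧸ Q) :=
  card_quotient_inf_of_codisjoint (codisjoint_of_coprime_of_nsmul_mem hmn hP hQ)

/-- The submodule `{x | k • x ∈ N}`, often written `(N : k)`. It recovers a submodule of index prime
to `k` from its intersection with one of index `k`. -/
def nsmulColon (N : Submodule R M) (k : ℕ) : Submodule R M :=
  N.comap (k • LinearMap.id)

theorem mem_nsmulColon {N : Submodule R M} {k : ℕ} {x : M} : x ∈ nsmulColon N k ↔ k • x ∈ N :=
  Iff.rfl

theorem le_nsmulColon (N : Submodule R M) (k : ℕ) : N ≤ nsmulColon N k :=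
  fun _ hx ↦ N.nsmul_mem hx k

theorem nsmulColon_inf_nsmulColon {m n : ℕ} (hmn : m.Coprime n) (N : Submodule R M) :
    nsmulColon N m ⊓ nsmulColon N n = N :=
  le_antisymm (fun _ hx ↦ mem_of_coprime_of_nsmul_mem hmn hx.1 hx.2)
    (le_inf (le_nsmulColon N m) (le_nsmulColon N n))

theorem nsmulColon_inf_eq_left {m n : ℕ} (hmn : m.Coprime n) {P Q : Submodule R M}
    (hP : ∀ x, m • x ∈ P) (hQ : ∀ x, n • x ∈ Q) : nsmulColon (P ⊓ Q) n = P :=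
  le_antisymm (fun x hx ↦ mem_of_coprime_of_nsmul_mem hmn (hP x) hx.1)
    (fun x hx ↦ ⟨P.nsmul_mem hx n, hQ x⟩)

theorem nsmulColon_inf_eq_right {m n : ℕ} (hmn : m.Coprime n) {P Q : Submodule R M}
    (hP : ∀ x, m • x ∈ P) (hQ : ∀ x, n • x ∈ Q) : nsmulColon (P ⊓ Q) m = Q :=
  inf_comm P Q ▸ nsmulColon_inf_eq_left hmn.symm hQ hP

theorem coprime_card_quotient_of_nsmul_mem {m n : ℕ} (hmn : m.Coprime n) {P : Submodule R M}
    [Finite (M ⧸ P)] (hP : ∀ x, m • x ∈ P) : (Nat.card (M ⧸ P)).Coprime n := by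
  refine coprime_card_of_nsmul_eq_zero hmn fun y ↦ ?_
  obtain ⟨x, rfl⟩ := P.mkQ_surjective y
  rw [← map_nsmul, Submodule.mkQ_apply, Submodule.Quotient.mk_eq_zero]
  exact hP x

theorem card_quotient_nsmulColon {m n : ℕ} (hmn : m.Coprime n) {N : Submodule R M}
    [Finite (M ⧸ N)] (hN : Nat.card (M ⧸ N) = m * n) :
    Nat.card (M ⧸ nsmulColon N n) = m ∧ Nat.card (M ⧸ nsmulColon N m) = n := by
  have hmnN (x : M) : (m * n) • x ∈ N := hN ▸ nsmul_card_quotient_mem N x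
  have hm (x : M) : m • x ∈ nsmulColon N n := by
    rw [mem_nsmulColon, ← mul_nsmul]
    exact hmnN x
  have hn (x : M) : n • x ∈ nsmulColon N m := by
    rw [mem_nsmulColon, ← mul_nsmul']
    exact hmnN x
  have hfinite (k : ℕ) : Finite (M ⧸ nsmulColon N k) :=
    Finite.of_surjective _ (Submodule.factor_surjective (le_nsmulColon N k))
  have hprod : Nat.card (M ⧸ nsmulColon N n) * Nat.card (M ⧸ nsmulColon N m) = m * n := by
    rw [← card_quotient_inf_of_coprime hmn hm hn, nsmulColon_inf_nsmulColon hmn.symm, hN]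
  exact eq_and_eq_of_mul_eq_mul_of_coprime hprod (coprime_card_quotient_of_nsmul_mem hmn hm)
    (coprime_card_quotient_of_nsmul_mem hmn.symm hn)

theorem bijOn_inf_of_coprime {m n : ℕ} (hm : 0 < m) (hn : 0 < n) (hmn : m.Coprime n) :
    Set.BijOn (fun p : Submodule R M × Submodule R M ↦ p.1 ⊓ p.2)
      {p | Nat.card (M ⧸ p.1) = m ∧ Nat.card (M ⧸ p.2) = n}
      {N | Nat.card (M ⧸ N) = m * n} := by
  have hinv : Set.InvOn (fun N : Submodule R M ↦ (nsmulColon N n, nsmulColon N m))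
      (fun p ↦ p.1 ⊓ p.2) {p | Nat.card (M ⧸ p.1) = m ∧ Nat.card (M ⧸ p.2) = n}
      {N | Nat.card (M ⧸ N) = m * n} := by
    refine ⟨?_, fun N _ ↦ nsmulColon_inf_nsmulColon hmn.symm N⟩
    rintro ⟨P, Q⟩ ⟨rfl, rfl⟩
    refine Prod.ext ?_ ?_
    · exact nsmulColon_inf_eq_left hmn (nsmul_card_quotient_mem P) (nsmul_card_quotient_mem Q)
    · exact nsmulColon_inf_eq_right hmn (nsmul_card_quotient_mem P) (nsmul_card_quotient_mem Q)
  refine hinv.bijOn ?_ fun N hN ↦ ?_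
  · rintro ⟨P, Q⟩ ⟨rfl, rfl⟩
    exact card_quotient_inf_of_coprime hmn (nsmul_card_quotient_mem P) (nsmul_card_quotient_mem Q)
  · have hfinite : Finite (M ⧸ N) := Nat.finite_of_card_ne_zero (hN ▸ (Nat.mul_pos hm hn).ne')
    exact card_quotient_nsmulColon hmn hN

end Submodule

theorem ideal_count_multiplicative_general (R M : Type*) [Ring R] [AddCommGroup M] [Module R M]
    (m n : ℕ) (hm : 0 < m) (hn : 0 < n) (hmn : Nat.Coprime m n) :
    Set.BijOn (fun p : Submodule R M × Submodule R M => p.1 ⊓ p.2)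
      {p : Submodule R M × Submodule R M | Nat.card (M ⧸ p.1) = m ∧ Nat.card (M ⧸ p.2) = n}
      {N : Submodule R M | Nat.card (M ⧸ N) = m * n} ∧
    Nat.card {N : Submodule R M // Nat.card (M ⧸ N) = m * n} =
      Nat.card {P : Submodule R M // Nat.card (M ⧸ P) = m} *
        Nat.card {Q : Submodule R M // Nat.card (M ⧸ Q) = n} :=
  have hbij := bijOn_inf_of_coprime hm hn hmn
  ⟨hbij, hbij.ncard_eq.symm.trans <|
    Set.ncard_prod (s := {P | Nat.card (M ⧸ P) = m}) (t := {Q | Nat.card (M ⧸ Q) = n})⟩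

/-- For coprime `m, n`, the map `(J, J') ↦ J ∩ J'` is a bijection from pairs of ideals of
indices `m` and `n` onto ideals of index `m·n`; in particular
`a_{mn}(R) = a_m(R) · a_n(R)`. -/
theorem ideal_count_multiplicative (R : Type*) [CommRing R] (m n : ℕ)
    (hm : 0 < m) (hn : 0 < n) (hmn : Nat.Coprime m n) :
    Set.BijOn (fun p : Ideal R × Ideal R => p.1 ⊓ p.2)
      {p : Ideal R × Ideal R | Nat.card (R ⧸ p.1) = m ∧ Nat.card (R ⧸ p.2) = n}
      {I : Ideal R | Nat.card (R ⧸ I) = m * n} ∧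
    Nat.card {I : Ideal R // Nat.card (R ⧸ I) = m * n} =
      Nat.card {J : Ideal R // Nat.card (R ⧸ J) = m} *
        Nat.card {J' : Ideal R // Nat.card (R ⧸ J') = n} :=
  ideal_count_multiplicative_general R R m n hm hn hmn
end

section
/- Let d ≥ 1 and for T > 0 let M(T) be the number of subgroups of ℤ^d of finite index at most T. Then M(T)/T^d → (∏_{n=2}^d ζ(n))/d as T → ∞, where ζ is the Riemann zeta function (the product being empty, hence 1, when d = 1). -/
open Filter Topology
open scoped ENNReal

/-!
A finite-index subgroup `L` of `ℤ × G` is determined by its projection `kℤ` to `ℤ`, its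
intersection `Λ` with `G`, and the class modulo `Λ` of any `v` with `(k, v) ∈ L`. Every such triple
occurs and `[ℤ × G : L] = k [G : Λ]`, so a pair `(k, Λ)` arises from exactly `[G : Λ]` subgroups.
Iterating over the rank and exchanging the order of summation, one may weight `k` instead of `Λ`:
for every `φ`,
`∑_{L ≤ ℤ^(d+1)} φ [L] = ∑_{k ≥ 1} k^d ∑_{Λ ≤ ℤ^d} φ (k [Λ])`.

Taking `φ n = n^(-s)` gives `∑_{Λ ≤ ℤ^d} [Λ]^(-s) = ζ(s) ζ(s-1) ⋯ ζ(s-d+1)`. Taking `φ` to be the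
indicator of `n ≤ T` gives `M_{d+1}(T) = ∑_{Λ ≤ ℤ^d} ∑_{k ≤ T/[Λ]} k^d`. The inner sum is at most
`(T/[Λ])^(d+1)` and asymptotic to `(T/[Λ])^(d+1)/(d+1)`, so by dominated convergence
`M_{d+1}(T)/T^(d+1)` tends to `(d+1)⁻¹ ∑_{Λ ≤ ℤ^d} [Λ]^(-(d+1)) = (d+1)⁻¹ ζ(d+1) ζ(d) ⋯ ζ(2)`.

The sums are taken in `ℝ≥0∞`, so that they can be rearranged before they are known to converge.
-/

/-! ### Subgroups of `ℤ × G` -/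

lemma index_eq_index_map_fst_mul_index_comap_inr {A B : Type*} [AddCommGroup A] [AddCommGroup B]
    (L : AddSubgroup (A × B)) :
    L.index = (L.map (AddMonoidHom.fst A B)).index * (L.comap (AddMonoidHom.inr A B)).index := by
  have range_inr : (AddMonoidHom.inr A B).range = (AddMonoidHom.fst A B).ker := by
    ext ⟨a, b⟩
    simp [-AddMonoidHom.ker_fst, AddMonoidHom.mem_ker, eq_comm]
  have range_fst : (AddMonoidHom.fst A B).range = ⊤ :=
    AddMonoidHom.range_eq_top.2 Prod.fst_surjective
  rw [AddSubgroup.index_comap, AddSubgroup.index_map, range_inr, range_fst, AddSubgroup.index_top,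
    mul_one, ← AddSubgroup.relIndex_sup_left (AddMonoidHom.fst A B).ker L, mul_comm,
    AddSubgroup.relIndex_mul_index le_sup_left]

lemma zmultiples_index_eq (K : AddSubgroup ℤ) : AddSubgroup.zmultiples (K.index : ℤ) = K := by
  obtain ⟨a, rfl⟩ := Int.subgroup_cyclic K
  rw [← AddSubgroup.zmultiples_eq_closure, Int.index_zmultiples, Int.zmultiples_natAbs]

/-- The finite-index subgroups of an additive group; the index is `0` when it is infinite. -/
abbrev FiniteIndexAddSubgroup (G : Type*) [AddGroup G] : Type _ :=
  {Λ : AddSubgroup G // Λ.index ≠ 0}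

section IntProd

variable {G : Type*} [AddCommGroup G]

/-- The subgroup of `ℤ × G` generated by `0 × Λ` and `(k, v)`, where `v` is any representative of
the class `q`. To avoid choosing `v`, it is encoded as the preimage of the cyclic subgroup of
`ℤ × G ⧸ Λ` generated by `(k, q)`. -/
def extensionByInt (k : ℤ) (Λ : AddSubgroup G) (q : G ⧸ Λ) : AddSubgroup (ℤ × G) :=
  (AddSubgroup.zmultiples (k, q)).comap
    ((AddMonoidHom.id ℤ).prodMap (QuotientAddGroup.mk' Λ))

lemma mem_extensionByInt {k : ℤ} {Λ : AddSubgroup G} {q : G ⧸ Λ} {x : ℤ} {g : G} :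
    (x, g) ∈ extensionByInt k Λ q ↔ ∃ t : ℤ, t * k = x ∧ t • q = g := by
  simp [extensionByInt, AddSubgroup.mem_zmultiples_iff]

lemma map_fst_extensionByInt (k : ℤ) (Λ : AddSubgroup G) (q : G ⧸ Λ) :
    (extensionByInt k Λ q).map (AddMonoidHom.fst ℤ G) = AddSubgroup.zmultiples k := by
  ext x
  rw [AddSubgroup.mem_zmultiples_iff]
  constructor
  · rintro ⟨⟨_, g⟩, hg, rfl⟩
    obtain ⟨t, ht, -⟩ := mem_extensionByInt.1 hg
    exact ⟨t, ht⟩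
  · rintro ⟨t, rfl⟩
    obtain ⟨g, hg⟩ := QuotientAddGroup.mk_surjective (t • q)
    exact ⟨(t • k, g), mem_extensionByInt.2 ⟨t, rfl, hg.symm⟩, rfl⟩

lemma comap_inr_extensionByInt {k : ℤ} (hk : k ≠ 0) (Λ : AddSubgroup G) (q : G ⧸ Λ) :
    (extensionByInt k Λ q).comap (AddMonoidHom.inr ℤ G) = Λ := by
  ext g
  simp [mem_extensionByInt, hk, eq_comm (a := (0 : G ⧸ Λ))]

lemma mk_mem_extensionByInt {k : ℤ} (hk : k ≠ 0) {Λ : AddSubgroup G} {q : G ⧸ Λ} {g : G} :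
    (k, g) ∈ extensionByInt k Λ q ↔ q = g := by
  simp [mem_extensionByInt, hk]

lemma index_extensionByInt {k : ℤ} (hk : k ≠ 0) (Λ : AddSubgroup G) (q : G ⧸ Λ) :
    (extensionByInt k Λ q).index = k.natAbs * Λ.index := by
  rw [index_eq_index_map_fst_mul_index_comap_inr, map_fst_extensionByInt,
    comap_inr_extensionByInt hk, Int.index_zmultiples]

lemma extensionByInt_eq_of_mem {L : AddSubgroup (ℤ × G)} {k : ℤ} {v : G} (hv : (k, v) ∈ L)
    (hk : L.map (AddMonoidHom.fst ℤ G) = AddSubgroup.zmultiples k) :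
    extensionByInt k (L.comap (AddMonoidHom.inr ℤ G)) v = L := by
  have mem_iff (t : ℤ) (g : G) :
      t • (v : G ⧸ L.comap (AddMonoidHom.inr ℤ G)) = g ↔ (t * k, g) ∈ L := by
    rw [← QuotientAddGroup.mk_zsmul, QuotientAddGroup.eq, AddSubgroup.mem_comap,
      ← L.add_mem_cancel_left (L.zsmul_mem hv t)]
    simp
  ext ⟨x, g⟩
  rw [mem_extensionByInt]
  constructor
  · rintro ⟨t, rfl, hg⟩
    exact (mem_iff t g).1 hg
  · intro hL
    have hx : x ∈ AddSubgroup.zmultiples k := hk ▸ AddSubgroup.mem_map_of_mem _ hL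
    obtain ⟨t, rfl⟩ := AddSubgroup.mem_zmultiples_iff.1 hx
    exact ⟨t, rfl, (mem_iff t g).2 hL⟩

variable (G) in
/-- `extensionByInt` as a map onto the finite-index subgroups of `ℤ × G`. -/
def finiteIndexExtension (p : Σ p : ℕ+ × FiniteIndexAddSubgroup G, G ⧸ p.2.1) :
    FiniteIndexAddSubgroup (ℤ × G) :=
  ⟨extensionByInt (p.1.1 : ℤ) p.1.2.1 p.2, by
    rw [index_extensionByInt (by simp)]
    exact mul_ne_zero (by simp) p.1.2.2⟩

lemma index_finiteIndexExtension (p : Σ p : ℕ+ × FiniteIndexAddSubgroup G, G ⧸ p.2.1) :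
    (finiteIndexExtension G p).1.index = p.1.1 * p.1.2.1.index := by
  simp [finiteIndexExtension, index_extensionByInt]

lemma finiteIndexExtension_injective : Function.Injective (finiteIndexExtension G) := by
  rintro ⟨⟨k, Λ, hΛ⟩, q⟩ ⟨⟨k', Λ', hΛ'⟩, q'⟩ h
  replace h : extensionByInt k Λ q = extensionByInt k' Λ' q' := congrArg Subtype.val h
  have hk : k = k' := by
    have := congrArg (fun L => (L.map (AddMonoidHom.fst ℤ G)).index) h
    simpa [map_fst_extensionByInt, Int.index_zmultiples] using this
  subst hk
  have hk0 : (k : ℤ) ≠ 0 := by simp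
  have hΛΛ' : Λ = Λ' := by
    have := congrArg (AddSubgroup.comap (AddMonoidHom.inr ℤ G)) h
    rwa [comap_inr_extensionByInt hk0, comap_inr_extensionByInt hk0] at this
  subst hΛΛ'
  obtain ⟨v, rfl⟩ := QuotientAddGroup.mk_surjective q
  have hv : ((k : ℤ), v) ∈ extensionByInt (k : ℤ) Λ q' :=
    h ▸ (mk_mem_extensionByInt hk0).2 rfl
  rw [(mk_mem_extensionByInt hk0).1 hv]

lemma finiteIndexExtension_surjective : Function.Surjective (finiteIndexExtension G) := by
  rintro ⟨L, hL⟩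
  have hmul := index_eq_index_map_fst_mul_index_comap_inr L ▸ hL
  have hk := (zmultiples_index_eq (L.map (AddMonoidHom.fst ℤ G))).symm
  obtain ⟨⟨_, v⟩, hv, hfst⟩ := hk.ge (AddSubgroup.mem_zmultiples _)
  exact ⟨⟨(⟨_, Nat.pos_of_ne_zero (left_ne_zero_of_mul hmul)⟩, ⟨_, right_ne_zero_of_mul hmul⟩), v⟩,
    Subtype.ext (extensionByInt_eq_of_mem (hfst ▸ hv) hk)⟩

lemma finiteIndexExtension_bijective : Function.Bijective (finiteIndexExtension G) :=
  ⟨finiteIndexExtension_injective, finiteIndexExtension_surjective⟩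

lemma tsum_finiteIndexAddSubgroup_int_prod (φ : ℕ → ℝ≥0∞) :
    ∑' L : FiniteIndexAddSubgroup (ℤ × G), φ L.1.index =
      ∑' (k : ℕ+) (Λ : FiniteIndexAddSubgroup G), Λ.1.index * φ (k * Λ.1.index) := by
  have card_quotient (Λ : FiniteIndexAddSubgroup G) :
      (ENat.card (G ⧸ Λ.1) : ℝ≥0∞) = Λ.1.index := by
    have : Finite (G ⧸ Λ.1) := (AddSubgroup.fintypeOfIndexNeZero Λ.2).finite
    rw [ENat.card_eq_coe_natCard, ENat.toENNReal_coe, AddSubgroup.index]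
  rw [← (Equiv.ofBijective _ finiteIndexExtension_bijective).tsum_eq,
    ENNReal.tsum_sigma', ← ENNReal.tsum_prod]
  simp only [Equiv.ofBijective_apply, index_finiteIndexExtension, ENNReal.tsum_const, card_quotient]

end IntProd

lemma tsum_finiteIndexAddSubgroup_congr {G H : Type*} [AddGroup G] [AddGroup H] (e : G ≃+ H)
    (φ : ℕ → ℝ≥0∞) :
    ∑' Λ : FiniteIndexAddSubgroup G, φ Λ.1.index =
      ∑' Λ : FiniteIndexAddSubgroup H, φ Λ.1.index := by
  have index_map (Λ : AddSubgroup G) : (e.mapAddSubgroup Λ).index = Λ.index :=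
    AddSubgroup.index_map_equiv Λ e
  let mapEquiv : FiniteIndexAddSubgroup G ≃ FiniteIndexAddSubgroup H :=
    e.mapAddSubgroup.toEquiv.subtypeEquiv fun Λ => not_congr (by rw [← index_map]; rfl)
  rw [← mapEquiv.tsum_eq]
  exact tsum_congr fun Λ => congrArg φ (index_map Λ.1).symm

/-! ### Subgroups of `ℤ^d` -/

lemma index_eq_one_of_subsingleton {G : Type*} [AddGroup G] [Subsingleton G] (Λ : AddSubgroup G) :
    Λ.index = 1 :=
  AddSubgroup.index_eq_one.2 (Subsingleton.elim Λ ⊤)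

lemma tsum_sublattice_succ_weight_index (d : ℕ) (φ : ℕ → ℝ≥0∞) :
    ∑' L : FiniteIndexAddSubgroup (Fin (d + 1) → ℤ), φ L.1.index =
      ∑' (k : ℕ+) (Λ : FiniteIndexAddSubgroup (Fin d → ℤ)), Λ.1.index * φ (k * Λ.1.index) := by
  rw [← tsum_finiteIndexAddSubgroup_int_prod]
  exact tsum_finiteIndexAddSubgroup_congr (Fin.consLinearEquiv ℤ fun _ => ℤ).symm.toAddEquiv φ

lemma tsum_sublattice_succ (d : ℕ) (φ : ℕ → ℝ≥0∞) :
    ∑' L : FiniteIndexAddSubgroup (Fin (d + 1) → ℤ), φ L.1.index =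
      ∑' k : ℕ+, (k : ℝ≥0∞) ^ d *
        ∑' Λ : FiniteIndexAddSubgroup (Fin d → ℤ), φ (k * Λ.1.index) := by
  induction d generalizing φ with
  | zero =>
    simp only [tsum_sublattice_succ_weight_index, index_eq_one_of_subsingleton, Nat.cast_one,
      one_mul, pow_zero]
  | succ d ih =>
    calc ∑' L : FiniteIndexAddSubgroup (Fin (d + 2) → ℤ), φ L.1.index
        = ∑' (k : ℕ+) (L : FiniteIndexAddSubgroup (Fin (d + 1) → ℤ)),
            L.1.index * φ (k * L.1.index) := tsum_sublattice_succ_weight_index _ φ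
      _ = ∑' (k : ℕ+) (l : ℕ+), (l : ℝ≥0∞) ^ d * ∑' Λ : FiniteIndexAddSubgroup (Fin d → ℤ),
            ((l * Λ.1.index : ℕ) : ℝ≥0∞) * φ (k * (l * Λ.1.index)) :=
          tsum_congr fun k => ih fun n => n * φ (k * n)
      _ = ∑' (l : ℕ+) (k : ℕ+), (l : ℝ≥0∞) ^ (d + 1) * ∑' Λ : FiniteIndexAddSubgroup (Fin d → ℤ),
            Λ.1.index * φ (l * (k * Λ.1.index)) := by
          rw [ENNReal.tsum_comm]
          simp only [Nat.cast_mul, mul_assoc, ENNReal.tsum_mul_left, pow_succ, mul_left_comm]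
      _ = ∑' l : ℕ+, (l : ℝ≥0∞) ^ (d + 1) *
            ∑' L : FiniteIndexAddSubgroup (Fin (d + 1) → ℤ), φ (l * L.1.index) := by
          refine tsum_congr fun l => ?_
          rw [ENNReal.tsum_mul_left, tsum_sublattice_succ_weight_index d fun n => φ (l * n)]

lemma tsum_sublattice_eq_prod (d : ℕ) (φ : ℕ →* ℝ≥0∞) :
    ∑' Λ : FiniteIndexAddSubgroup (Fin d → ℤ), φ Λ.1.index =
      ∏ i ∈ Finset.range d, ∑' k : ℕ+, (k : ℝ≥0∞) ^ i * φ k := by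
  induction d with
  | zero =>
    have : Unique (FiniteIndexAddSubgroup (Fin 0 → ℤ)) :=
      ⟨⟨⟨⊤, by simp⟩⟩, fun Λ => Subtype.ext (Subsingleton.elim _ _)⟩
    simp [index_eq_one_of_subsingleton]
  | succ d ih =>
    rw [tsum_sublattice_succ, Finset.prod_range_succ, mul_comm, ← ih, ← ENNReal.tsum_mul_right]
    simp only [map_mul, ENNReal.tsum_mul_left, mul_assoc]

/-! ### The Dirichlet series of sublattice indices -/

lemma tsum_pnat_inv_pow_ne_top {n : ℕ} (hn : 1 < n) : ∑' k : ℕ+, ((k : ℝ≥0∞) ^ n)⁻¹ ≠ ∞ := by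
  have hsum : Summable fun k : ℕ+ => ((k : ℝ) ^ n)⁻¹ :=
    (Real.summable_nat_pow_inv.2 hn).comp_injective PNat.coe_injective
  convert hsum.tsum_ofReal_ne_top with k
  rw [ENNReal.ofReal_inv_of_pos (by simp), ENNReal.ofReal_pow (by simp), ENNReal.ofReal_natCast]

lemma riemannZeta_eq_toReal_tsum_pnat {n : ℕ} (hn : 1 < n) :
    riemannZeta n = ((∑' k : ℕ+, ((k : ℝ≥0∞) ^ n)⁻¹).toReal : ℂ) := by
  rw [ENNReal.tsum_toReal_eq (by simp), tsum_pnat_eq_tsum_succ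
    (f := fun k : ℕ => (((k : ℝ≥0∞) ^ n)⁻¹).toReal), Complex.ofReal_tsum,
    zeta_eq_tsum_one_div_nat_add_one_cpow (by simpa using hn)]
  refine tsum_congr fun k => ?_
  rw [Complex.cpow_natCast, ENNReal.toReal_inv, ENNReal.toReal_pow, ENNReal.toReal_natCast]
  push_cast
  rw [one_div]

lemma tsum_sublattice_inv_index_pow (d s : ℕ) :
    ∑' Λ : FiniteIndexAddSubgroup (Fin d → ℤ), ((Λ.1.index : ℝ≥0∞) ^ s)⁻¹ =
      ∏ i ∈ Finset.range d, ∑' k : ℕ+, (k : ℝ≥0∞) ^ i * ((k : ℝ≥0∞) ^ s)⁻¹ :=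
  tsum_sublattice_eq_prod d
    { toFun := fun n => ((n : ℝ≥0∞) ^ s)⁻¹
      map_one' := by simp
      map_mul' := fun m n => by
        rw [Nat.cast_mul, mul_pow, ENNReal.mul_inv (by simp) (by simp)] }

lemma tsum_sublattice_inv_index_pow_succ_rank (d : ℕ) :
    ∑' Λ : FiniteIndexAddSubgroup (Fin d → ℤ), ((Λ.1.index : ℝ≥0∞) ^ (d + 1))⁻¹ =
      ∏ n ∈ Finset.Icc 2 (d + 1), ∑' k : ℕ+, ((k : ℝ≥0∞) ^ n)⁻¹ := by
  have pow_mul_inv (k : ℕ+) {i : ℕ} (hi : i < d) :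
      (k : ℝ≥0∞) ^ (d - 1 - i) * ((k : ℝ≥0∞) ^ (d + 1))⁻¹ = ((k : ℝ≥0∞) ^ (2 + i))⁻¹ := by
    rw [show d + 1 = d - 1 - i + (2 + i) by omega, pow_add,
      ENNReal.mul_inv (by simp) (by simp), ← mul_assoc,
      ENNReal.mul_inv_cancel (by simp) (by simp), one_mul]
  rw [tsum_sublattice_inv_index_pow, ← Finset.Ico_add_one_right_eq_Icc,
    Finset.prod_Ico_eq_prod_range, show d + 1 + 1 - 2 = d by omega,
    ← Finset.prod_range_reflect _ d]
  exact Finset.prod_congr rfl fun i hi =>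
    tsum_congr fun k => pow_mul_inv k (Finset.mem_range.1 hi)

lemma tsum_sublattice_inv_index_pow_succ_rank_ne_top (d : ℕ) :
    ∑' Λ : FiniteIndexAddSubgroup (Fin d → ℤ), ((Λ.1.index : ℝ≥0∞) ^ (d + 1))⁻¹ ≠ ∞ := by
  rw [tsum_sublattice_inv_index_pow_succ_rank]
  exact ENNReal.prod_ne_top fun n hn => tsum_pnat_inv_pow_ne_top (Finset.mem_Icc.1 hn).1

lemma summable_sublattice_inv_index_pow_succ_rank (d : ℕ) :
    Summable fun Λ : FiniteIndexAddSubgroup (Fin d → ℤ) => ((Λ.1.index : ℝ) ^ (d + 1))⁻¹ := by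
  simpa using ENNReal.summable_toReal (tsum_sublattice_inv_index_pow_succ_rank_ne_top d)

lemma tsum_sublattice_inv_index_pow_succ_rank_eq_prod_riemannZeta (d : ℕ) :
    ((∑' Λ : FiniteIndexAddSubgroup (Fin d → ℤ), ((Λ.1.index : ℝ) ^ (d + 1))⁻¹ : ℝ) : ℂ) =
      ∏ n ∈ Finset.Icc 2 (d + 1), riemannZeta n := by
  have htoReal := congrArg ENNReal.toReal (tsum_sublattice_inv_index_pow_succ_rank d)
  rw [ENNReal.toReal_prod, ENNReal.tsum_toReal_eq (by simp)] at htoReal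
  simp only [ENNReal.toReal_inv, ENNReal.toReal_pow, ENNReal.toReal_natCast] at htoReal
  rw [htoReal, Complex.ofReal_prod]
  exact Finset.prod_congr rfl fun n hn =>
    (riemannZeta_eq_toReal_tsum_pnat (Finset.mem_Icc.1 hn).1).symm

/-! ### Power sums -/

lemma tsum_pnat_ite_le_eq_sum_range_floor {M : Type*} [AddCommMonoid M] [TopologicalSpace M]
    (f : ℕ → M) (x : ℝ) :
    ∑' k : ℕ+, (if (k : ℝ) ≤ x then f k else 0) = ∑ i ∈ Finset.range ⌊x⌋₊, f (i + 1) := by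
  have succ_le_iff (i : ℕ) : ((i + 1 : ℕ) : ℝ) ≤ x ↔ i ∈ Finset.range ⌊x⌋₊ := by
    rw [Finset.mem_range, ← Nat.add_one_le_iff, Nat.le_floor_iff' i.succ_ne_zero]
  rw [tsum_pnat_eq_tsum_succ (f := fun k : ℕ => if (k : ℝ) ≤ x then f k else 0)]
  simp only [succ_le_iff]
  rw [tsum_eq_sum fun i hi => if_neg hi]
  exact Finset.sum_congr rfl fun i hi => if_pos hi

section PowerSum

variable (r : ℕ)

lemma pow_succ_div_le_sum_range_add_one_pow (n : ℕ) :
    (n : ℝ) ^ (r + 1) / (r + 1) ≤ ∑ i ∈ Finset.range n, ((i : ℝ) + 1) ^ r := by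
  have hmono : MonotoneOn (fun x : ℝ => x ^ r) (Set.Icc 0 (0 + n)) :=
    (pow_left_monotoneOn (n := r)).mono fun x hx => hx.1
  simpa using hmono.integral_le_sum

lemma sum_range_add_one_pow_le_pow_succ_div_add_pow (n : ℕ) :
    ∑ i ∈ Finset.range n, ((i : ℝ) + 1) ^ r ≤ (n : ℝ) ^ (r + 1) / (r + 1) + n ^ r := by
  have hmono : MonotoneOn (fun x : ℝ => x ^ r) (Set.Icc 0 (0 + n)) :=
    (pow_left_monotoneOn (n := r)).mono fun x hx => hx.1
  calc ∑ i ∈ Finset.range n, ((i : ℝ) + 1) ^ r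
      ≤ ∑ i ∈ Finset.range n, (i : ℝ) ^ r + (n : ℝ) ^ r := by
        rw [← Finset.sum_range_succ, Finset.sum_range_succ']
        simp [pow_nonneg]
    _ ≤ (n : ℝ) ^ (r + 1) / (r + 1) + n ^ r := by
        gcongr
        simpa using hmono.sum_le_integral

lemma tendsto_sum_range_add_one_pow_div :
    Tendsto (fun n : ℕ => (∑ i ∈ Finset.range n, ((i : ℝ) + 1) ^ r) / (n : ℝ) ^ (r + 1)) atTop
      (𝓝 (r + 1 : ℝ)⁻¹) := by
  have hupper : Tendsto (fun n : ℕ => (r + 1 : ℝ)⁻¹ + (n : ℝ)⁻¹) atTop (𝓝 (r + 1 : ℝ)⁻¹) := by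
    simpa using tendsto_const_nhds.add (tendsto_inv_atTop_nhds_zero_nat (𝕜 := ℝ))
  refine tendsto_of_tendsto_of_tendsto_of_le_of_le' tendsto_const_nhds hupper ?_ ?_
  · filter_upwards [eventually_gt_atTop 0] with n hn
    rw [le_div_iff₀ (by positivity), inv_mul_eq_div]
    exact pow_succ_div_le_sum_range_add_one_pow r n
  · filter_upwards [eventually_gt_atTop 0] with n hn
    rw [div_le_iff₀ (by positivity)]
    refine (sum_range_add_one_pow_le_pow_succ_div_add_pow r n).trans_eq ?_
    field_simp
    ring

lemma tendsto_sum_range_floor_add_one_pow_div :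
    Tendsto (fun x : ℝ => (∑ i ∈ Finset.range ⌊x⌋₊, ((i : ℝ) + 1) ^ r) / x ^ (r + 1)) atTop
      (𝓝 (r + 1 : ℝ)⁻¹) := by
  have hlim := ((tendsto_sum_range_add_one_pow_div r).comp tendsto_nat_floor_atTop).mul
    ((tendsto_nat_floor_div_atTop (R := ℝ)).pow (r + 1))
  rw [one_pow, mul_one] at hlim
  refine hlim.congr' ?_
  filter_upwards [eventually_ge_atTop 1] with x hx
  have hfloor : 0 < ⌊x⌋₊ := Nat.floor_pos.2 hx
  rw [Function.comp_apply, div_pow, div_mul_div_cancel₀ (by positivity)]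

lemma sum_range_floor_add_one_pow_le {x : ℝ} (hx : 0 ≤ x) :
    ∑ i ∈ Finset.range ⌊x⌋₊, ((i : ℝ) + 1) ^ r ≤ x ^ (r + 1) := by
  have hfloor : (⌊x⌋₊ : ℝ) ≤ x := Nat.floor_le hx
  calc ∑ i ∈ Finset.range ⌊x⌋₊, ((i : ℝ) + 1) ^ r
      ≤ ∑ _i ∈ Finset.range ⌊x⌋₊, x ^ r := by
        gcongr with i hi
        have : (i : ℝ) + 1 ≤ ⌊x⌋₊ := mod_cast Finset.mem_range.1 hi
        linarith
    _ = ⌊x⌋₊ * x ^ r := by simp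
    _ ≤ x ^ (r + 1) := by rw [pow_succ']; gcongr

lemma tendsto_tsum_sum_range_floor_div {ι : Type*} {w : ι → ℝ} (hw : ∀ i, 0 < w i)
    (hsum : Summable fun i => (w i ^ (r + 1))⁻¹) :
    Tendsto (fun T : ℝ =>
        (∑' i, ∑ j ∈ Finset.range ⌊T / w i⌋₊, ((j : ℝ) + 1) ^ r) / T ^ (r + 1)) atTop
      (𝓝 ((∑' i, (w i ^ (r + 1))⁻¹) / (r + 1))) := by
  simp only [← tsum_div_const]
  refine tendsto_tsum_of_dominated_convergence hsum (fun i => ?_) ?_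
  · have hdiv : Tendsto (fun T : ℝ => T / w i) atTop atTop := tendsto_id.atTop_div_const (hw i)
    have hterm := ((tendsto_sum_range_floor_add_one_pow_div r).comp hdiv).const_mul
      (w i ^ (r + 1))⁻¹
    refine hterm.congr fun T => ?_
    have := (hw i).ne'
    simp only [Function.comp_apply, div_pow]
    field_simp
  · filter_upwards [eventually_gt_atTop 0] with T hT i
    have := hw i
    rw [Real.norm_of_nonneg (by positivity), div_le_iff₀ (by positivity), inv_mul_eq_div,
      ← div_pow]
    exact sum_range_floor_add_one_pow_le r (by positivity)

end PowerSum

/-! ### The counting function -/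

lemma card_index_le_eq_toReal_tsum {G : Type*} [AddGroup G] (T : ℝ) :
    (Nat.card {Λ : AddSubgroup G // Λ.index ≠ 0 ∧ (Λ.index : ℝ) ≤ T} : ℝ) =
      (∑' Λ : FiniteIndexAddSubgroup G, if (Λ.1.index : ℝ) ≤ T then (1 : ℝ≥0∞) else 0).toReal := by
  rw [← ENNReal.toReal_enatCard, ← ENNReal.tsum_one,
    ← (Equiv.subtypeSubtypeEquivSubtypeInter (fun Λ : AddSubgroup G => Λ.index ≠ 0)
      fun Λ => (Λ.index : ℝ) ≤ T).tsum_eq]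
  exact congrArg ENNReal.toReal
    (tsum_subtype {Λ : FiniteIndexAddSubgroup G | (Λ.1.index : ℝ) ≤ T} fun _ => (1 : ℝ≥0∞))

lemma card_sublattice_succ_index_le (d : ℕ) (T : ℝ) :
    (Nat.card {Λ : AddSubgroup (Fin (d + 1) → ℤ) // Λ.index ≠ 0 ∧ (Λ.index : ℝ) ≤ T} : ℝ) =
      ∑' Λ : FiniteIndexAddSubgroup (Fin d → ℤ),
        ∑ i ∈ Finset.range ⌊T / Λ.1.index⌋₊, ((i : ℝ) + 1) ^ d := by
  have sum_over_multiples (Λ : FiniteIndexAddSubgroup (Fin d → ℤ)) :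
      ∑' k : ℕ+, (k : ℝ≥0∞) ^ d * (if ((k * Λ.1.index : ℕ) : ℝ) ≤ T then 1 else 0) =
        ∑ i ∈ Finset.range ⌊T / Λ.1.index⌋₊, ((i + 1 : ℕ) : ℝ≥0∞) ^ d := by
    have hΛ : (0 : ℝ) < Λ.1.index := mod_cast Nat.pos_of_ne_zero Λ.2
    simp only [← tsum_pnat_ite_le_eq_sum_range_floor (fun k : ℕ => (k : ℝ≥0∞) ^ d),
      le_div_iff₀ hΛ, Nat.cast_mul, mul_ite, mul_one, mul_zero]
  rw [card_index_le_eq_toReal_tsum,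
    tsum_sublattice_succ d fun n => if (n : ℝ) ≤ T then (1 : ℝ≥0∞) else 0]
  simp only [← ENNReal.tsum_mul_left]
  rw [ENNReal.tsum_comm]
  simp only [sum_over_multiples]
  rw [ENNReal.tsum_toReal_eq (by simp)]
  refine tsum_congr fun Λ => ?_
  rw [ENNReal.toReal_sum (by simp)]
  refine Finset.sum_congr rfl fun i _ => ?_
  rw [ENNReal.toReal_pow, ENNReal.toReal_natCast, Nat.cast_add_one]

/-- The number `M(T)` of finite-index subgroups of `ℤ^d` of index at most `T` satisfies
`M(T)/T^d → (∏_{n=2}^d ζ(n))/d` as `T → ∞`. -/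
theorem sublattice_count_asymptotic (d : ℕ) (hd : 1 ≤ d) :
    Tendsto (fun T : ℝ =>
        (((Nat.card {Λ : AddSubgroup (Fin d → ℤ) //
            Λ.index ≠ 0 ∧ (Λ.index : ℝ) ≤ T} : ℝ) / T ^ d : ℝ) : ℂ))
      atTop
      (𝓝 ((∏ n ∈ Finset.Icc 2 d, riemannZeta (n : ℂ)) / (d : ℂ))) := by
  obtain ⟨e, rfl⟩ := Nat.exists_eq_add_of_le' hd
  have hlim := tendsto_tsum_sum_range_floor_div e
    (w := fun Λ : FiniteIndexAddSubgroup (Fin e → ℤ) => (Λ.1.index : ℝ))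
    (fun Λ => mod_cast Nat.pos_of_ne_zero Λ.2) (summable_sublattice_inv_index_pow_succ_rank e)
  simp only [card_sublattice_succ_index_le,
    ← tsum_sublattice_inv_index_pow_succ_rank_eq_prod_riemannZeta]
  exact_mod_cast (Complex.continuous_ofReal.tendsto _).comp hlim
end
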